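/- arXiv:1501.01489 — 3 statements merged into one kernel-verified Lean document; each statement's English description precedes it below -/
import Mathlib

section
/- Fix an integer k ≥ 0 and for 0 ≤ j ≤ k let L_j denote the number of chords of length j in the uniformly random chord diagram C_n of size n. Then the vector (L_0, L_1, …, L_k) converges in distribution, as n→∞, to (T_0, T_1, …, T_k) where the T_i are independent Poisson random variables with mean 1; that is, for all nonnegative integers m_0,…,m_k, lim_{n→∞} P(L_0=m_0, …, L_k=m_k) = ∏_{i=0}^{k} e^{−1}/m_i!. -/
open scoped Classical
open Finset Filter

/-- A chord diagram of size `n`: a fixed-point-free involution of the `2n`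
endpoints `0, 1, …, 2n-1` (endpoint `i` here corresponds to the label `i+1`). -/
abbrev ChordDiagram (n : ℕ) :=
  {f : Fin (2*n) → Fin (2*n) // (∀ i, f (f i) = i) ∧ ∀ i, f i ≠ i}

/-- `c` lies strictly between `a` and `b`. -/
def Between {m : ℕ} (a b c : Fin m) : Prop := min a b < c ∧ c < max a b

/-- The chord of `C` containing endpoint `x` crosses the chord containing endpoint `u`:
exactly one of the two endpoints `u`, `C u` lies strictly between `x` and `C x`. -/
def Crosses {n : ℕ} (C : ChordDiagram n) (x u : Fin (2*n)) : Prop :=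
  Xor' (Between x (C.1 x) u) (Between x (C.1 x) (C.1 u))

/-- Uniform probability of an event over all chord diagrams of size `n`. -/
noncomputable def prob (n : ℕ) (E : ChordDiagram n → Prop) : ℝ :=
  ((Finset.univ.filter E).card : ℝ) / ((Finset.univ : Finset (ChordDiagram n)).card : ℝ)

/-- The degree of the chord of `C` containing endpoint `x`: the number of chords
crossing it (each chord counted once via its smaller endpoint). -/
noncomputable def chordDegree {n : ℕ} (C : ChordDiagram n) (x : Fin (2*n)) : ℕ :=
  (Finset.univ.filter fun u => u < C.1 u ∧ Crosses C x u).card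

/-- The length of the chord of `C` containing endpoint `x`: the number of endpoints
on the smaller of the two arcs it determines. -/
def chordLength {n : ℕ} (C : ChordDiagram n) (x : Fin (2*n)) : ℕ :=
  min (max (x:ℕ) (C.1 x : ℕ) - min (x:ℕ) (C.1 x : ℕ) - 1)
      (2*n - (max (x:ℕ) (C.1 x : ℕ) - min (x:ℕ) (C.1 x : ℕ)) - 1)

/-- Degree of the chord containing endpoint `1` (index `0`). -/
noncomputable def degreeC1 (n : ℕ) (C : ChordDiagram n) : ℕ :=
  if h : 0 < n then chordDegree C ⟨0, by omega⟩ else 0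

/-- Length of the chord containing endpoint `1` (index `0`). -/
noncomputable def lengthC1 (n : ℕ) (C : ChordDiagram n) : ℕ :=
  if h : 0 < n then chordLength C ⟨0, by omega⟩ else 0

/-- Membership in the component (w.r.t. the crossing relation) of the chord
containing the root endpoint. -/
def InRootComponent {n : ℕ} (C : ChordDiagram n) (root x : Fin (2*n)) : Prop :=
  x = root ∨ x = C.1 root ∨ Relation.ReflTransGen (fun a b => Crosses C a b) root x

/-- The chord containing `x` is simple: it joins two (cyclically) consecutive endpoints. -/
def IsSimple {n : ℕ} (C : ChordDiagram n) (x : Fin (2*n)) : Prop :=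
  (C.1 x : ℕ) = ((x : ℕ) + 1) % (2*n) ∨ (x : ℕ) = ((C.1 x : ℕ) + 1) % (2*n)

/-- `C` is monolithic (with respect to `root`): every chord not in the root
component is simple, and no two simple chords are next to each other. -/
def Monolithic {n : ℕ} (C : ChordDiagram n) (root : Fin (2*n)) : Prop :=
  (∀ x : Fin (2*n), ¬ InRootComponent C root x → IsSimple C x) ∧
  ¬ ∃ i : Fin (2*n), (C.1 i : ℕ) = ((i : ℕ) + 1) % (2*n) ∧
      ∃ j : Fin (2*n), (j : ℕ) = ((i : ℕ) + 2) % (2*n) ∧ (C.1 j : ℕ) = ((i : ℕ) + 3) % (2*n)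

/-- `L_j`: the number of chords of length `j` in `C`. -/
noncomputable def lengthCount (n : ℕ) (j : ℕ) (C : ChordDiagram n) : ℕ :=
  (Finset.univ.filter fun x : Fin (2*n) => x < C.1 x ∧ chordLength C x = j).card

/-- The endpoints of chords of `C` of length at least `k`. -/
noncomputable def lenAtLeast (n k : ℕ) (C : ChordDiagram n) : Finset (Fin (2*n)) :=
  Finset.univ.filter fun x => k ≤ chordLength C x

/-- The number of chords with endpoints in `S` crossing the chord containing `x`. -/
noncomputable def degreeIn {n : ℕ} (C : ChordDiagram n) (S : Finset (Fin (2*n)))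
    (x : Fin (2*n)) : ℕ :=
  (S.filter fun u => u < C.1 u ∧ Crosses C x u).card

/-- `S` (a chord-closed set of endpoints) is a set of chords each crossing at
least `k` other chords of `S`. -/
def IsCore {n : ℕ} (C : ChordDiagram n) (k : ℕ) (S : Finset (Fin (2*n))) : Prop :=
  (∀ x ∈ S, C.1 x ∈ S) ∧ ∀ x ∈ S, k ≤ degreeIn C S x

/-- The `k`-core: the union of all sets of chords in which every chord crosses
at least `k` other chords of the set. -/
noncomputable def kCore (n k : ℕ) (C : ChordDiagram n) : Finset (Fin (2*n)) :=
  Finset.univ.filter fun x => ∃ S : Finset (Fin (2*n)), IsCore C k S ∧ x ∈ S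

/-- The number of chords in the `k`-core of `C`. -/
noncomputable def kCoreSize (n k : ℕ) (C : ChordDiagram n) : ℕ :=
  ((kCore n k C).filter fun x => x < C.1 x).card

/-- `Z_k`: the number of chords of length strictly less than `k`. -/
noncomputable def shortCount (n k : ℕ) (C : ChordDiagram n) : ℕ :=
  (Finset.univ.filter fun x : Fin (2*n) => x < C.1 x ∧ chordLength C x < k).card

/-- `C` contains a balanced clique of size `m`: a set of `m` pairwise crossing
chords with exactly one endpoint in each of the `2m` blocks of length `⌊n/m⌋`. -/
def HasBalancedClique (n m : ℕ) (C : ChordDiagram n) : Prop :=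
  ∃ S : Finset (Fin (2*n)),
    (∀ x ∈ S, C.1 x ∈ S) ∧
    (∀ x ∈ S, ∀ u ∈ S, u ≠ x → u ≠ C.1 x → Crosses C x u) ∧
    (∀ t : ℕ, 1 ≤ t → t ≤ 2*m →
      (S.filter fun x => (t-1) * (n/m) ≤ (x:ℕ) ∧ (x:ℕ) < t * (n/m)).card = 1)

/-- An oriented chord diagram: a chord diagram together with auxiliary fair-coin
bits; the bit attached to a crossing pair of chords (indexed by their smaller
endpoints) decides which chord over-crosses the other. -/
abbrev OrientedChordDiagram (n : ℕ) := ChordDiagram n × (Fin (2*n) → Fin (2*n) → Bool)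

/-- The smaller endpoint of the chord of `C` containing `x`. -/
def chordRep {n : ℕ} (C : ChordDiagram n) (x : Fin (2*n)) : Fin (2*n) := min x (C.1 x)

/-- In the oriented diagram `D`, the chord containing `x` crosses and
over-crosses the chord containing `u`. -/
def OverD {n : ℕ} (D : OrientedChordDiagram n) (x u : Fin (2*n)) : Prop :=
  Crosses D.1 x u ∧
    ((chordRep D.1 x ≤ chordRep D.1 u ∧ D.2 (chordRep D.1 x) (chordRep D.1 u) = true) ∨
     (chordRep D.1 u < chordRep D.1 x ∧ D.2 (chordRep D.1 u) (chordRep D.1 x) = false))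

/-- Uniform probability of an event over all oriented chord diagrams of size `n`
(this yields a uniformly random diagram with each crossing oriented by an
independent fair coin). -/
noncomputable def probD (n : ℕ) (E : OrientedChordDiagram n → Prop) : ℝ :=
  ((Finset.univ.filter E).card : ℝ) /
    ((Finset.univ : Finset (OrientedChordDiagram n)).card : ℝ)

/-- The chords (given by their endpoints in `S`) are strongly connected in the
directed intersection graph of `D`, using only chords of `S`. -/
def StronglyConnectedIn {n : ℕ} (D : OrientedChordDiagram n) (S : Set (Fin (2*n))) : Prop :=
  ∀ c ∈ S, ∀ d ∈ S,
    Relation.ReflTransGen (fun a b => a ∈ S ∧ b ∈ S ∧ OverD D a b) c d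

/-- The number of chords with both endpoints in the cyclic block
`{i, i+1, …, i+t-1}` (mod `2n`). -/
noncomputable def chordsInBlock (n : ℕ) (C : ChordDiagram n) (i t : ℕ) : ℕ :=
  (Finset.univ.filter fun x : Fin (2*n) => x < C.1 x ∧
    (∃ a < t, (x:ℕ) = (i + a) % (2*n)) ∧ (∃ a < t, ((C.1 x : ℕ)) = (i + a) % (2*n))).card

/-- The chord of `x` reaches the chord of `u` in the directed intersection graph
(of the whole diagram); endpoints of the same chord represent the same vertex. -/
def ReachChord {n : ℕ} (D : OrientedChordDiagram n) (x u : Fin (2*n)) : Prop :=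
  u = x ∨ u = D.1.1 x ∨ Relation.ReflTransGen (fun a b => OverD D a b) x u

/-- The chords of `x` and `u` lie in the same strong component. -/
def MutualReach {n : ℕ} (D : OrientedChordDiagram n) (x u : Fin (2*n)) : Prop :=
  ReachChord D x u ∧ ReachChord D u x

/-- The number of single-chord strong components of `D`. -/
noncomputable def singleCount (n : ℕ) (D : OrientedChordDiagram n) : ℕ :=
  (Finset.univ.filter fun x : Fin (2*n) =>
    x < D.1.1 x ∧ ∀ u : Fin (2*n), u ≠ x → u ≠ D.1.1 x → ¬ MutualReach D x u).card

abbrev FI (α : Type) := {f : α → α // (∀ i, f (f i) = i) ∧ ∀ i, f i ≠ i}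

lemma FI_congr {α β : Type} (e : α ≃ β) : Nat.card (FI α) = Nat.card (FI β) := by
  refine Nat.card_congr
    { toFun := fun f => ⟨fun b => e (f.1 (e.symm b)), fun i => by simp [f.2.1], fun i h => ?_⟩
      invFun := fun f => ⟨fun b => e.symm (f.1 (e b)), fun i => by simp [f.2.1], fun i h => ?_⟩
      left_inv := fun f => by ext; simp
      right_inv := fun f => by ext; simp }
  · exact f.2.2 (e.symm i) (by simpa using congrArg e.symm h)
  · exact f.2.2 (e i) (by simpa using congrArg e h)

lemma FI_restrict {α : Type} (g : α → α) (hg : ∀ x, g (g x) = x) :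
    Nat.card {f : FI α // ∀ x, g x ≠ x → f.1 x = g x} = Nat.card (FI {x // g x = x}) := by
  refine Nat.card_congr
    { toFun := fun f => ⟨fun x => ⟨f.1.1 x.1, ?_⟩, fun i => ?_, fun i h => ?_⟩
      invFun := fun h => ⟨⟨fun x => if hx : g x = x then (h.1 ⟨x, hx⟩).1 else g x, fun i => ?_,
        fun i => ?_⟩, fun x hx => ?_⟩
      left_inv := fun f => ?_
      right_inv := fun f => ?_ }
  · by_contra hne
    have h1 := f.2 _ hne
    rw [f.1.2.1] at h1
    have h2 : g x.1 = f.1.1 x.1 := by rw [h1, hg, ← h1]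
    exact f.1.2.2 x.1 (by rw [← h2, x.2])
  · ext; simp [f.1.2.1]
  · exact f.1.2.2 i.1 (congrArg Subtype.val h)
  · by_cases hi : g i = i
    · have := (h.1 ⟨i, hi⟩).2
      simp [hi, this, h.2.1]
    · have : ¬ g (g i) = g i := by rw [hg]; exact fun h => hi h.symm
      have h' : ¬ i = g i := fun h => hi h.symm
      simp [hi, hg, h']
  · by_cases hi : g i = i
    · have := h.2.2 ⟨i, hi⟩
      simp only [hi, dite_true]
      exact fun h => this (Subtype.ext h)
    · simp [hi]
  · simp [hx]
  · ext x
    by_cases hx : g x = x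
    · simp [hx]
    · simp [hx, f.2 x hx]
  · ext x
    simp [x.2]

noncomputable def dd (m : ℕ) : ℕ := Nat.card (FI (Fin m))

lemma FI_card {α : Type} [Finite α] {m : ℕ} (h : Nat.card α = m) : Nat.card (FI α) = dd m := by
  subst h
  exact FI_congr (Finite.equivFin α)

lemma dd_zero : dd 0 = 1 := by
  unfold dd
  rw [Nat.card_eq_one_iff_exists]
  exact ⟨⟨fun x => x.elim0, fun x => x.elim0, fun x => x.elim0⟩,
    fun y => by ext x; exact x.elim0⟩

lemma FI_restrict_card {α : Type} [Fintype α] (g : α → α) (hg : ∀ x, g (g x) = x) {r : ℕ}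
    (hr : (univ.filter fun x => g x ≠ x).card = r) :
    Nat.card {f : FI α // ∀ x, g x ≠ x → f.1 x = g x} = dd (Fintype.card α - r) := by
  rw [FI_restrict g hg]
  apply FI_card
  rw [Nat.card_eq_fintype_card, Fintype.card_subtype]
  have := Finset.card_filter_add_card_filter_not (s := (univ : Finset α)) (fun x => g x = x)
  rw [← hr, ← Finset.card_univ (α := α)]
  simp only [ne_eq]
  omega

lemma dd_rec (m : ℕ) : dd (m + 2) = (m + 1) * dd m := by
  unfold dd
  have e : FI (Fin (m+2)) ≃ Σ b : {b : Fin (m+2) // b ≠ 0}, {f : FI (Fin (m+2)) // f.1 0 = b.1} :=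
    { toFun := fun f => ⟨⟨f.1 0, f.2.2 0⟩, f, rfl⟩
      invFun := fun s => s.2.1
      left_inv := fun f => rfl
      right_inv := by
        rintro ⟨⟨b, hb⟩, f, hf⟩
        dsimp at hf
        subst hf
        rfl }
  rw [Nat.card_congr e, Nat.card_sigma]
  have : ∀ b : {b : Fin (m+2) // b ≠ 0}, Nat.card {f : FI (Fin (m+2)) // f.1 0 = b.1} =
      Nat.card (FI (Fin m)) := by
    rintro ⟨b, hb⟩
    have h1 := FI_restrict_card (r := 2) (fun x => Equiv.swap 0 b x) (by simp) (by
      have := Equiv.Perm.card_support_swap (Ne.symm hb)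
      refine Eq.trans ?_ this; congr 1; ext x; simp)
    rw [Fintype.card_fin] at h1
    show _ = dd m
    rw [Nat.add_sub_cancel] at h1
    rw [← h1]
    refine Nat.card_congr (Equiv.subtypeEquivRight fun f => ?_)
    constructor
    · intro hf x hx
      dsimp at hf
      by_cases h0 : x = 0
      · subst h0; simp [hf]
      · by_cases h2 : x = b
        · subst h2; simp; rw [← hf, f.2.1]
        · exact absurd (Equiv.swap_apply_of_ne_of_ne h0 h2) hx
    · intro h
      simpa using h 0 (by simp [hb])
  rw [Finset.sum_congr rfl (fun b _ => this b)]
  simp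

lemma dd_pos (n : ℕ) : 0 < dd (2*n) := by
  induction n with
  | zero => simp [dd_zero]
  | succ n ih => rw [show 2*(n+1) = 2*n+2 by ring, dd_rec]; positivity

lemma dd_prod (n R : ℕ) (h : R ≤ n) :
    (dd (2*n) : ℝ) = (∏ s ∈ range R, (2*(n:ℝ) - 2*s - 1)) * dd (2*n - 2*R) := by
  induction R with
  | zero => simp
  | succ R ih =>
    rw [ih (by omega), prod_range_succ]
    obtain ⟨q, rfl⟩ : ∃ q, n = q + (R + 1) := ⟨n - (R+1), by omega⟩
    rw [show 2*(q+(R+1)) - 2*R = 2*q+2 by omega, show 2*(q+(R+1)) - 2*(R+1) = 2*q by omega, dd_rec]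
    push_cast
    ring

/-- an involution with the prescribed chords -/
lemma exists_inv {α ι : Type} [Fintype α] (s e : ι → α) (T : Finset ι)
    (h1 : ∀ t ∈ T, s t ≠ e t)
    (h2 : ∀ t ∈ T, ∀ u ∈ T, t ≠ u → s t ≠ s u ∧ s t ≠ e u ∧ e t ≠ e u) :
    ∃ g : α → α, (∀ x, g (g x) = x) ∧ (univ.filter fun x => g x ≠ x).card = 2 * T.card ∧
      (∀ x, g x ≠ x ↔ ∃ t ∈ T, x = s t ∨ x = e t) ∧ (∀ t ∈ T, g (s t) = e t) := by
  induction T using Finset.induction_on with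
  | empty => exact ⟨id, by simp, by simp, by simp, by simp⟩
  | insert a T ha ih =>
    obtain ⟨g, hg, hc, hs, ht⟩ := ih (fun t h => h1 t (mem_insert_of_mem h))
      (fun t h u h' => h2 t (mem_insert_of_mem h) u (mem_insert_of_mem h'))
    have hse := h1 a (mem_insert_self _ _)
    have hsa : g (s a) = s a := by
      by_contra hh
      obtain ⟨t, htT, h⟩ := (hs _).1 hh
      have hne : a ≠ t := fun h => ha (h ▸ htT)
      have := h2 a (mem_insert_self _ _) t (mem_insert_of_mem htT) hne
      grind
    have hea : g (e a) = e a := by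
      by_contra hh
      obtain ⟨t, htT, h⟩ := (hs _).1 hh
      have hne : a ≠ t := fun h => ha (h ▸ htT)
      have := h2 a (mem_insert_self _ _) t (mem_insert_of_mem htT) hne
      have := h2 t (mem_insert_of_mem htT) a (mem_insert_self _ _) hne.symm
      grind
    have hgs : ∀ x, x ≠ s a → g x ≠ s a := fun x hx h => hx (by rw [← hg x, h, hsa])
    have hge : ∀ x, x ≠ e a → g x ≠ e a := fun x hx h => hx (by rw [← hg x, h, hea])
    refine ⟨fun x => if x = s a then e a else if x = e a then s a else g x, ?_, ?_, ?_, ?_⟩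
    · intro x
      by_cases hx : x = s a
      · simp [hx, hse.symm]
      · by_cases hx' : x = e a
        · simp [hx', hse.symm]
        · simp [hx, hx', hgs x hx, hge x hx', hg]
    · have : (univ.filter fun x => (if x = s a then e a else if x = e a then s a else g x) ≠ x) =
        insert (s a) (insert (e a) (univ.filter fun x => g x ≠ x)) := by
        ext x
        simp only [mem_filter, mem_univ, true_and, mem_insert]
        grind
      rw [this, card_insert_of_notMem, card_insert_of_notMem, hc, card_insert_of_notMem ha]
      · ring
      · simp [hea]
      · simp [hsa, hse]
    · intro x
      have := hs x
      simp only [mem_insert, exists_eq_or_imp]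
      rw [← this]
      grind
    · intro t htT
      rcases mem_insert.1 htT with rfl | htT'
      · simp
      · have hne : t ≠ a := fun h => ha (h ▸ htT')
        have := h2 t htT a (mem_insert_self _ _) hne
        simp [this.1, this.2.1, ht t htT']

lemma count_T {α ι : Type} [Fintype α] (s e : ι → α) (T : Finset ι)
    (h1 : ∀ t ∈ T, s t ≠ e t)
    (h2 : ∀ t ∈ T, ∀ u ∈ T, t ≠ u → s t ≠ s u ∧ s t ≠ e u ∧ e t ≠ e u) :
    2 * T.card ≤ Fintype.card α ∧
    Nat.card {f : FI α // ∀ t ∈ T, f.1 (s t) = e t} = dd (Fintype.card α - 2 * T.card) := by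
  obtain ⟨g, hg, hc, hs, ht⟩ := exists_inv s e T h1 h2
  refine ⟨hc ▸ Finset.card_le_univ _, ?_⟩
  rw [← FI_restrict_card g hg hc]
  refine Nat.card_congr (Equiv.subtypeEquivRight fun f => ?_)
  constructor
  · intro hf x hx
    obtain ⟨t, htT, rfl | rfl⟩ := (hs x).1 hx
    · rw [hf t htT, ht t htT]
    · rw [← ht t htT, hg, ht t htT, ← hf t htT, f.2.1]
  · intro hf t htT
    rw [hf (s t) ((hs _).2 ⟨t, htT, Or.inl rfl⟩), ht t htT]


lemma inversion (m L N : ℕ) (h : L ≤ N) :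
    ∑ r ∈ range (N+1), ((-1:ℝ)^(r+m) * (r.choose m)) * (L.choose r) = if L = m then 1 else 0 := by
  have h0 : ∑ r ∈ range (N+1), ((-1:ℝ)^(r+m) * (r.choose m)) * (L.choose r) =
      ∑ r ∈ range (L+1), ((-1:ℝ)^(r+m) * (r.choose m)) * (L.choose r) := by
    symm
    apply sum_subset
    · intro x; simp; omega
    · intro x _ hx
      rw [Nat.choose_eq_zero_of_lt (by simp at hx; omega : L < x)]; simp
  rw [h0]
  by_cases hm : L < m
  · rw [if_neg (by omega)]
    apply sum_eq_zero
    intro r hr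
    rw [Nat.choose_eq_zero_of_lt (by simp at hr; omega : r < m)]; simp
  obtain ⟨q, rfl⟩ : ∃ q, L = m + q := ⟨L - m, by omega⟩
  rw [show m + q + 1 = m + (q + 1) by ring, sum_range_add]
  rw [sum_eq_zero (s := range m), zero_add]
  · have key : ∀ x ∈ range (q+1), ((-1:ℝ)^(m+x+m) * ((m+x).choose m)) * ((m+q).choose (m+x)) =
        ((m+q).choose m) * ((-1)^x * (q.choose x)) := by
      intro x hx
      have hx' : x ≤ q := by simp at hx; omega
      have := Nat.choose_mul (n := m + q) (k := m + x) (s := m) (show m ≤ m + x by omega)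
      rw [Nat.add_sub_cancel_left, Nat.add_sub_cancel_left] at this
      have h2 : (((m+q).choose (m+x) : ℕ):ℝ) * ((m+x).choose m : ℕ) = (m+q).choose m * q.choose x := by
        exact_mod_cast this
      have h3 : (-1:ℝ)^(m+x+m) = (-1)^x := by
        rw [show m+x+m = x + 2*m by ring, pow_add, pow_mul]; simp
      rw [h3, mul_assoc, mul_comm (((m+x).choose m : ℕ):ℝ), h2]; ring
    rw [sum_congr rfl key, ← mul_sum]
    have h4 := congrArg (Int.cast : ℤ → ℝ) (Int.alternating_sum_range_choose (n := q))
    push_cast at h4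
    rw [h4]
    by_cases hq : q = 0
    · simp [hq]
    · simp [hq]
  · intro r hr
    rw [Nat.choose_eq_zero_of_lt (by simpa using hr : r < m)]; simp

lemma hasSum_lim (m : ℕ) :
    HasSum (fun r : ℕ => ((-1:ℝ)^(r+m) * (r.choose m)) * (1 / (r.factorial : ℝ)))
      (Real.exp (-1) / (m.factorial : ℝ)) := by
  have h := NormedSpace.expSeries_div_hasSum_exp (𝔸 := ℝ) (-1)
  rw [← Real.exp_eq_exp_ℝ] at h
  have h2 := h.div_const (m.factorial : ℝ)
  rw [← (add_left_injective m).hasSum_iff]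
  · refine Eq.mpr (congrArg (fun f => HasSum f _) (funext fun q => ?_)) h2
    have h3 : (-1:ℝ)^(q+m+m) = (-1)^q := by
      rw [show q+m+m = q + 2*m by ring, pow_add, pow_mul]; simp
    have h4 : (((q+m).choose m : ℕ) : ℝ) * q.factorial * m.factorial = (q+m).factorial := by
      exact_mod_cast (Nat.add_choose_mul_factorial_mul_factorial q m)
    have : (m.factorial : ℝ) ≠ 0 := by positivity
    have : (q.factorial : ℝ) ≠ 0 := by positivity
    have : ((q+m).factorial : ℝ) ≠ 0 := by positivity
    simp only [Function.comp]
    rw [h3]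
    field_simp
    rw [← h4]
  · intro x hx
    rw [Nat.choose_eq_zero_of_lt]
    · simp
    · by_contra hh
      exact hx ⟨x - m, by simp; omega⟩

lemma pi_partial {ι : Type} [Fintype ι] [DecidableEq ι] (f : ι → ℕ → ℝ) (N : ℕ) :
    ∑ r ∈ Fintype.piFinset (fun _ : ι => range N), ∏ j, f j (r j) =
      ∏ j, ∑ r ∈ range N, f j r := by
  rw [Finset.prod_univ_sum]

lemma tendsto_box {ι : Type} [Fintype ι] [DecidableEq ι] :
    Tendsto (fun N : ℕ => Fintype.piFinset (fun _ : ι => range N)) atTop atTop := by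
  apply tendsto_atTop_finset_of_monotone
  · intro a b hab
    exact Fintype.piFinset_subset _ _ (fun _ => range_mono hab)
  · intro x
    refine ⟨(univ.sup x) + 1, ?_⟩
    simp only [Fintype.mem_piFinset, mem_range]
    intro a
    exact Nat.lt_succ_of_le (le_sup (mem_univ a))

lemma pi_summable {ι : Type} [Fintype ι] [DecidableEq ι] (f : ι → ℕ → ℝ) (h0 : ∀ j r, 0 ≤ f j r)
    (hf : ∀ j, Summable (f j)) : Summable (fun r : ι → ℕ => ∏ j, f j (r j)) := by
  refine summable_of_sum_le (c := ∏ j, ∑' r, f j r) (fun r => prod_nonneg fun j _ => h0 _ _) ?_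
  intro u
  obtain ⟨N, hN⟩ := (tendsto_box (ι := ι)).eventually (eventually_ge_atTop u) |>.exists
  calc _ ≤ ∑ r ∈ Fintype.piFinset (fun _ : ι => range N), ∏ j, f j (r j) :=
        sum_le_sum_of_subset_of_nonneg hN (fun r _ _ => prod_nonneg fun j _ => h0 _ _)
    _ = ∏ j, ∑ r ∈ range N, f j r := pi_partial f N
    _ ≤ _ := prod_le_prod (fun j _ => sum_nonneg fun r _ => h0 _ _)
        (fun j _ => (hf j).sum_le_tsum _ (fun r _ => h0 _ _))

lemma pi_tsum {ι : Type} [Fintype ι] [DecidableEq ι] (f : ι → ℕ → ℝ) (a : ι → ℝ)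
    (hf : ∀ j, HasSum (f j) (a j)) :
    ∑' r : ι → ℕ, ∏ j, f j (r j) = ∏ j, a j := by
  have hs : Summable (fun r : ι → ℕ => ∏ j, f j (r j)) := by
    apply Summable.of_norm
    simp only [norm_prod]
    exact pi_summable (fun j r => ‖f j r‖) (fun _ _ => norm_nonneg _) (fun j => (hf j).summable.norm)
  have h1 := hs.hasSum.comp tendsto_box
  have h2 : Tendsto (fun N => ∏ j, ∑ r ∈ range N, f j r) atTop (nhds (∏ j, a j)) :=
    tendsto_finsetProd _ fun j _ => (hf j).tendsto_sum_nat
  refine tendsto_nhds_unique h1 (h2.congr fun N => ?_)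
  exact (pi_partial f N).symm

lemma moment_method {ι : Type} [Fintype ι] [DecidableEq ι] (m : ι → ℕ) (P : ℕ → ℝ)
    (E : ℕ → (ι → ℕ) → ℝ) (A : ℝ) (hA : 0 ≤ A)
    (hP : ∀ᶠ n in atTop, P n = ∑ r ∈ Fintype.piFinset (fun _ : ι => range (2*n+1)),
      (∏ j, ((-1:ℝ)^(r j + m j) * ((r j).choose (m j)))) * E n r)
    (hE0 : ∀ᶠ n in atTop, ∀ r, r ∉ Fintype.piFinset (fun _ : ι => range (2*n+1)) → E n r = 0)
    (hEb : ∀ᶠ n in atTop, ∀ r, |E n r| ≤ ∏ j, A^(r j) / ((r j).factorial : ℝ))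
    (hEl : ∀ r, Tendsto (fun n => E n r) atTop (nhds (∏ j, 1 / ((r j).factorial : ℝ)))) :
    Tendsto P atTop (nhds (∏ j, Real.exp (-1) / ((m j).factorial : ℝ))) := by
  rw [← pi_tsum _ _ (fun j => hasSum_lim (m j))]
  have key := tendsto_tsum_of_dominated_convergence (𝓕 := atTop)
    (f := fun n r => (∏ j, ((-1:ℝ)^(r j + m j) * ((r j).choose (m j)))) * E n r)
    (g := fun r : ι → ℕ => ∏ j, ((-1:ℝ)^(r j+m j) * ((r j).choose (m j))) * (1 / ((r j).factorial : ℝ)))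
    (bound := fun r : ι → ℕ => ∏ j, (2*A)^(r j) / ((r j).factorial : ℝ)) ?_ ?_ ?_
  · refine key.congr' ?_
    filter_upwards [hP, hE0] with n h1 h2
    rw [h1]
    apply tsum_eq_sum
    intro r hr
    rw [h2 r hr, mul_zero]
  · exact pi_summable (fun _ r => (2*A)^r / (r.factorial : ℝ)) (fun _ _ => by positivity)
      (fun _ => Real.summable_pow_div_factorial _)
  · intro r
    simp only [prod_mul_distrib (f := fun j => ((-1:ℝ)^(r j+m j) * ((r j).choose (m j))))]
    exact (hEl r).const_mul _
  · filter_upwards [hEb] with n hn r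
    rw [norm_mul, Real.norm_eq_abs (E n r)]
    calc _ ≤ (∏ j, (2:ℝ)^(r j)) * ∏ j, A^(r j) / ((r j).factorial : ℝ) := by
          gcongr
          · rw [norm_prod]
            refine prod_le_prod (fun _ _ => norm_nonneg _) fun j _ => ?_
            simp only [norm_mul, norm_pow, norm_neg, norm_one, one_pow, one_mul]
            rw [Real.norm_natCast]
            exact_mod_cast Nat.choose_le_two_pow _ _
          · exact hn r
      _ = _ := by
          rw [← prod_mul_distrib]
          refine prod_congr rfl fun j _ => ?_
          rw [mul_pow, mul_div_assoc]

lemma pow_le_desc (n R : ℕ) (h : R ≤ n) :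
    (n:ℝ)^R ≤ Real.exp 1 ^ R * ∏ s ∈ range R, ((n:ℝ) - s) := by
  induction R generalizing n with
  | zero => simp
  | succ R ih =>
    obtain ⟨n, rfl⟩ : ∃ q, n = q + 1 := ⟨n - 1, by omega⟩
    have h1 := ih n (by omega)
    rw [prod_range_succ']
    have h2 : ∀ s ∈ range R, (((n+1:ℕ):ℝ) - ((s+1:ℕ):ℝ)) = (n:ℝ) - s := by
      intro s _; push_cast; ring
    rw [prod_congr rfl h2]
    have h3 : ((n+1:ℕ):ℝ)^R ≤ Real.exp 1 * (n:ℝ)^R := by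
      rcases Nat.eq_zero_or_pos n with h0 | h0
      · have : R = 0 := by omega
        subst this
        simp
      · have hn : (0:ℝ) < n := by exact_mod_cast h0
        have e1 : ((n+1:ℕ):ℝ) = n * (1/n + 1) := by push_cast; field_simp; ring
        have e2 : (1/(n:ℝ) + 1)^R ≤ Real.exp 1 := by
          calc (1/(n:ℝ) + 1)^R ≤ (Real.exp (1/n))^R := by
                gcongr; exact Real.add_one_le_exp _
            _ = Real.exp (R * (1/n)) := by rw [← Real.exp_nat_mul]
            _ ≤ Real.exp 1 := by
                apply Real.exp_le_exp.2
                rw [mul_one_div, div_le_one hn]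
                exact_mod_cast (by omega : R ≤ n)
        rw [e1, mul_pow, mul_comm]
        gcongr
    calc ((n+1:ℕ):ℝ)^(R+1) = ((n+1:ℕ):ℝ)^R * ((n+1:ℕ):ℝ) := pow_succ _ _
      _ ≤ (Real.exp 1 * (n:ℝ)^R) * ((n+1:ℕ):ℝ) := by gcongr
      _ ≤ (Real.exp 1 * (Real.exp 1 ^ R * ∏ s ∈ range R, ((n:ℝ) - s))) * ((n+1:ℕ):ℝ) := by gcongr
      _ = _ := by push_cast; ring

lemma pn_bound (n R : ℕ) (h : R ≤ n) :
    (2*(n:ℝ))^R ≤ (2 * Real.exp 1)^R * ∏ s ∈ range R, (2*(n:ℝ) - 2*s - 1) := by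
  have h1 := pow_le_desc n R h
  have h2 : ∏ s ∈ range R, ((n:ℝ) - s) ≤ ∏ s ∈ range R, (2*(n:ℝ) - 2*s - 1) := by
    apply Finset.prod_le_prod
    · intro s hs
      have : (s:ℝ) + 1 ≤ n := by simp at hs; exact_mod_cast (by omega : s + 1 ≤ n)
      linarith
    · intro s hs
      have : (s:ℝ) + 1 ≤ n := by simp at hs; exact_mod_cast (by omega : s + 1 ≤ n)
      linarith
  rw [mul_pow, mul_pow, mul_assoc]
  gcongr
  exact h1.trans (by gcongr)

lemma pn_lim (R : ℕ) : Tendsto (fun n : ℕ => (2*(n:ℝ))^R / ∏ s ∈ range R, (2*(n:ℝ) - 2*s - 1))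
    atTop (nhds 1) := by
  have : ∀ n : ℕ, (2*(n:ℝ))^R / ∏ s ∈ range R, (2*(n:ℝ) - 2*s - 1) =
      ∏ s ∈ range R, (2*(n:ℝ)) / (2*(n:ℝ) - 2*s - 1) := by
    intro n; rw [prod_div_distrib]; simp
  simp only [this]
  suffices h : Tendsto (fun n : ℕ => ∏ s ∈ range R, (2*(n:ℝ)) / (2*(n:ℝ) - 2*s - 1)) atTop
      (nhds (∏ s ∈ range R, (1:ℝ))) by
    simpa only [prod_const_one] using h
  apply tendsto_finsetProd
  intro s _
  have h1 : Tendsto (fun n : ℕ => (2*(s:ℝ)+1) / (2*(n:ℝ) - 2*s - 1)) atTop (nhds 0) := by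
    apply Tendsto.const_div_atTop
    have : Tendsto (fun n : ℕ => 2*(n:ℝ) + (- 2*s - 1)) atTop atTop :=
      tendsto_atTop_add_const_right _ _ (tendsto_natCast_atTop_atTop.const_mul_atTop (by norm_num))
    refine this.congr fun n => by ring
  have h2 := h1.const_add 1
  rw [add_zero] at h2
  refine h2.congr' ?_
  filter_upwards [eventually_gt_atTop (s+1)] with n hn
  have : (s:ℝ) + 1 < n := by exact_mod_cast hn
  have : 2*(n:ℝ) - 2*s - 1 ≠ 0 := by linarith
  rw [eq_div_iff this, add_mul, div_mul_cancel₀ _ this]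
  ring

lemma choose_lim (r : ℕ) : Tendsto (fun n : ℕ => ((2*n).choose r : ℝ) / (2*(n:ℝ))^r)
    atTop (nhds (1 / (r.factorial : ℝ))) := by
  have h := (isEquivalent_choose r).comp_tendsto (tendsto_id.const_mul_atTop' (show 0 < 2 by norm_num) : Tendsto (fun n : ℕ => 2 * n) atTop atTop)
  have h2 := h.div (Asymptotics.IsEquivalent.refl (u := fun n : ℕ => (2*(n:ℝ))^r))
  refine h2.symm.tendsto_nhds ?_
  refine tendsto_const_nhds.congr' ?_
  filter_upwards [eventually_gt_atTop 0] with n hn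
  have : (0:ℝ) < n := by exact_mod_cast hn
  simp
  field_simp

def enp {n : ℕ} (i : Fin (2*n)) (j : ℕ) : Fin (2*n) :=
  ⟨((i:ℕ) + j + 1) % (2*n), Nat.mod_lt _ (by have := i.2; omega)⟩

lemma enp_cases {n k : ℕ} (hn : k + 1 < n) (i : Fin (2*n)) (j : ℕ) (hj : j ≤ k) :
    ((enp i j : Fin (2*n)) : ℕ) = i + j + 1 ∨
    ((enp i j : Fin (2*n)) : ℕ) + 2*n = i + j + 1 := by
  have hi := i.2
  unfold enp
  dsimp
  by_cases h : (i:ℕ) + j + 1 < 2*n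
  · left; exact Nat.mod_eq_of_lt h
  · right
    rw [Nat.mod_eq_sub_mod (by omega), Nat.mod_eq_of_lt (by omega)]
    omega

noncomputable def pres (n j : ℕ) (C : ChordDiagram n) : Finset (Fin (2*n)) :=
  univ.filter fun i => C.1 i = enp i j

lemma lengthCount_eq {n k : ℕ} (hn : k + 1 < n) (j : ℕ) (hj : j ≤ k) (C : ChordDiagram n) :
    lengthCount n j C = (pres n j C).card := by
  unfold lengthCount pres
  have hinv := C.2.1
  refine Finset.card_bij'
    (fun x _ => if (C.1 x : ℕ) = x + j + 1 then x else C.1 x)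
    (fun i _ => if i < C.1 i then i else C.1 i) ?_ ?_ ?_ ?_
  · intro x hx
    simp only [mem_filter, mem_univ, true_and, chordLength, Fin.lt_def] at hx ⊢
    have h1 := enp_cases hn x j hj
    have h2 := enp_cases hn (C.1 x) j hj
    have h3 := x.2
    have h4 := (C.1 x).2
    split_ifs with h
    · apply Fin.ext; omega
    · rw [hinv]; apply Fin.ext; omega
  · intro i hi
    simp only [mem_filter, mem_univ, true_and, chordLength, Fin.lt_def] at hi ⊢
    have h1 := enp_cases hn i j hj
    rw [← hi] at h1
    have h3 := i.2
    have h4 := (C.1 i).2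
    have h5 : (C.1 i : ℕ) ≠ i := fun h => C.2.2 i (Fin.ext h)
    split_ifs with h
    · omega
    · rw [hinv]; omega
  · intro x hx
    simp only [mem_filter, mem_univ, true_and, chordLength, Fin.lt_def] at hx ⊢
    split_ifs with h h' h' <;> simp_all
    omega
  · intro i hi
    simp only [mem_filter, mem_univ, true_and, chordLength, Fin.lt_def] at hi ⊢
    have h1 := enp_cases hn i j hj
    rw [← hi] at h1
    have h3 := i.2
    have h4 := (C.1 i).2
    split_ifs with h h' h'
    · rfl
    · omega
    · rw [hinv] at h'; omega
    · rw [hinv]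

/-- the factorial moments -/
noncomputable def mom (k n : ℕ) (r : Fin (k+1) → ℕ) : ℝ :=
  (∑ C : ChordDiagram n, ∏ j : Fin (k+1), (((pres n j C).card.choose (r j) : ℕ) : ℝ)) / (dd (2*n) : ℝ)

lemma card_CD (n : ℕ) : (Finset.univ : Finset (ChordDiagram n)).card = dd (2*n) := by
  unfold dd
  rw [Finset.card_univ, Nat.card_eq_fintype_card]

lemma pres_card_le (n j : ℕ) (C : ChordDiagram n) : (pres n j C).card ≤ 2*n := by
  simpa using Finset.card_le_univ (pres n j C)

lemma prob_eq {n k : ℕ} (hn : k + 1 < n) (m : ℕ → ℕ) :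
    prob n (fun C => ∀ j ≤ k, lengthCount n j C = m j) =
      ∑ r ∈ Fintype.piFinset (fun _ : Fin (k+1) => range (2*n+1)),
      (∏ j, ((-1:ℝ)^(r j + m j) * ((r j).choose (m j)))) * mom k n r := by
  unfold prob mom
  rw [card_CD]
  simp only [← mul_div_assoc]
  rw [← sum_div]
  congr 1
  simp only [mul_sum]
  rw [sum_comm, Finset.card_filter]
  push_cast
  refine sum_congr rfl fun C _ => ?_
  have h1 : ∀ r : Fin (k+1) → ℕ, (∏ j, ((-1:ℝ)^(r j + m j) * ((r j).choose (m j)))) *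
      ∏ j : Fin (k+1), (((pres n j C).card.choose (r j) : ℕ) : ℝ) =
      ∏ j : Fin (k+1), ((-1:ℝ)^(r j + m j) * ((r j).choose (m j))) *
        (((pres n j C).card.choose (r j) : ℕ) : ℝ) := fun r => by rw [← prod_mul_distrib]
  simp only [h1]
  rw [pi_partial (fun (j : Fin (k+1)) r => ((-1:ℝ)^(r + m j) * (r.choose (m j))) *
        (((pres n j C).card.choose r : ℕ) : ℝ))]
  simp only [inversion _ _ _ (pres_card_le n _ C)]
  by_cases h : ∀ j ≤ k, lengthCount n j C = m j
  · rw [if_pos h]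
    symm
    apply prod_eq_one
    intro j _
    rw [if_pos]
    rw [← h j (by omega), lengthCount_eq hn _ (by omega)]
  · rw [if_neg h]
    push Not at h
    obtain ⟨j, hj, hne⟩ := h
    symm
    apply prod_eq_zero (mem_univ (⟨j, by omega⟩ : Fin (k+1)))
    rw [if_neg]
    rwa [← lengthCount_eq hn _ (by simpa using hj)]

/-- no two different chords of the family share an endpoint -/
def NonConf (k n : ℕ) (S : Fin (k+1) → Finset (Fin (2*n))) : Prop :=
  ∀ t ∈ univ.sigma S, ∀ u ∈ univ.sigma S, t ≠ u →
    t.2 ≠ u.2 ∧ t.2 ≠ enp u.2 u.1 ∧ enp t.2 t.1 ≠ enp u.2 u.1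

noncomputable def fams (k n : ℕ) (r : Fin (k+1) → ℕ) : Finset (Fin (k+1) → Finset (Fin (2*n))) :=
  Fintype.piFinset (fun j => powersetCard (r j) univ)

lemma enp_ne {k n : ℕ} (hn : k + 1 < n) (i : Fin (2*n)) (j : ℕ) (hj : j ≤ k) : i ≠ enp i j := by
  intro h
  have := enp_cases hn i j hj
  rw [← h] at this
  have := i.2
  omega

lemma enp_inj {k n : ℕ} (hn : k + 1 < n) (j : ℕ) (hj : j ≤ k) :
    Function.Injective (fun i : Fin (2*n) => enp i j) := by
  intro i i' h
  have h1 := enp_cases hn i j hj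
  have h2 := enp_cases hn i' j hj
  have h' : (enp i j : ℕ) = enp i' j := congrArg Fin.val h
  apply Fin.ext
  omega

lemma fams_card {k n : ℕ} (r : Fin (k+1) → ℕ) :
    (fams k n r).card = ∏ j, (2*n).choose (r j) := by
  unfold fams
  rw [Fintype.card_piFinset]
  simp

lemma sigma_card {k n : ℕ} {r : Fin (k+1) → ℕ} {S} (hS : S ∈ fams k n r) :
    (univ.sigma S).card = ∑ j, r j := by
  unfold fams at hS
  rw [Fintype.mem_piFinset] at hS
  rw [card_sigma]
  exact sum_congr rfl fun j _ => (mem_powersetCard.1 (hS j)).2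

lemma count_S {k n : ℕ} (hn : k + 1 < n) {r : Fin (k+1) → ℕ} {S} (hS : S ∈ fams k n r) :
    (univ.filter fun C : ChordDiagram n => ∀ j : Fin (k+1), S j ⊆ pres n j C).card =
      if NonConf k n S then dd (2*n - 2 * ∑ j, r j) else 0 := by
  split_ifs with h
  · have := (count_T (fun t : (Σ _ : Fin (k+1), Fin (2*n)) => (t.2 : Fin (2*n)))
      (fun t => enp t.2 t.1)
      (univ.sigma S) (fun t _ => enp_ne hn _ _ (by omega)) h).2
    rw [Fintype.card_fin, sigma_card hS] at this
    rw [← this, Nat.card_eq_fintype_card, Fintype.card_subtype]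
    congr 1
    ext C
    simp only [mem_filter, mem_univ, true_and, mem_sigma, Sigma.forall, pres, Finset.subset_iff]
  · rw [card_eq_zero, filter_eq_empty_iff]
    intro C _ hC
    apply h
    intro t ht u hu htu
    simp only [mem_sigma, mem_univ, true_and] at ht hu
    have h1 := hC _ ht
    have h2 := hC _ hu
    simp only [pres, mem_filter, mem_univ, true_and] at h1 h2
    have e1 := enp_cases hn t.2 t.1 (by omega)
    have e2 := enp_cases hn u.2 u.1 (by omega)
    obtain ⟨j, i⟩ := t
    obtain ⟨j', i'⟩ := u
    dsimp only at *
    have hi := i.2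
    have hi' := i'.2
    have hj := j.2
    have hj' := j'.2
    have main : i ≠ i' := by
      intro hii
      subst hii
      apply htu
      have : (enp i j : ℕ) = enp i j' := by rw [← h1, ← h2]
      have : j = j' := by apply Fin.ext; omega
      rw [this]
    refine ⟨main, ?_, ?_⟩
    · intro h
      have h3 : enp i j = i' := by rw [← h1, h, ← h2, C.2.1]
      have h4 : (enp i j : ℕ) = i' := congrArg Fin.val h3
      have h5 : (i : ℕ) = enp i' j' := congrArg Fin.val h
      omega
    · intro h
      rw [← h1, ← h2] at h
      apply main
      rw [← C.2.1 i, h, C.2.1]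

lemma mom_eq {k n : ℕ} (hn : k + 1 < n) (r : Fin (k+1) → ℕ) :
    mom k n r = (((fams k n r).filter (NonConf k n)).card : ℝ) * dd (2*n - 2 * ∑ j, r j) /
      dd (2*n) := by
  unfold mom
  congr 1
  norm_cast
  have h1 : ∀ C : ChordDiagram n, ∏ j : Fin (k+1), (pres n j C).card.choose (r j) =
      ((fams k n r).filter fun S => ∀ j : Fin (k+1), S j ⊆ pres n j C).card := by
    intro C
    have : ((fams k n r).filter fun S => ∀ j : Fin (k+1), S j ⊆ pres n j C) =
        Fintype.piFinset (fun j => powersetCard (r j) (pres n j C)) := by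
      ext S
      simp only [fams, mem_filter, Fintype.mem_piFinset, mem_powersetCard, subset_univ, true_and]
      constructor
      · exact fun h j => ⟨h.2 j, h.1 j⟩
      · exact fun h => ⟨fun j => (h j).2, fun j => (h j).1⟩
    rw [this, Fintype.card_piFinset]
    simp
  simp only [h1]
  have h2 := sum_card_bipartiteAbove_eq_sum_card_bipartiteBelow
    (s := (univ : Finset (ChordDiagram n))) (t := fams k n r)
    (fun C S => ∀ j : Fin (k+1), S j ⊆ pres n j C)
  unfold bipartiteAbove bipartiteBelow at h2
  rw [h2, sum_congr rfl (fun S hS => count_S hn hS), ← sum_filter, sum_const, smul_eq_mul]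

lemma good_R_le {k n : ℕ} (hn : k + 1 < n) {r : Fin (k+1) → ℕ} {S} (hS : S ∈ fams k n r)
    (h : NonConf k n S) : ∑ j, r j ≤ n := by
  have := (count_T (fun t : (Σ _ : Fin (k+1), Fin (2*n)) => (t.2 : Fin (2*n)))
      (fun t => enp t.2 t.1)
      (univ.sigma S) (fun t _ => enp_ne hn _ _ (by omega)) h).1
  rw [Fintype.card_fin, sigma_card hS] at this
  omega

lemma mom_zero {k n : ℕ} (hn : k + 1 < n) {r : Fin (k+1) → ℕ} (h : n < ∑ j, r j) :
    mom k n r = 0 := by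
  rw [mom_eq hn]
  have : (fams k n r).filter (NonConf k n) = ∅ := by
    rw [filter_eq_empty_iff]
    intro S hS hc
    have := good_R_le hn hS hc
    omega
  simp [this]

lemma mom_eq' {k n : ℕ} (hn : k + 1 < n) {r : Fin (k+1) → ℕ} (h : ∑ j, r j ≤ n) :
    mom k n r = (((fams k n r).filter (NonConf k n)).card : ℝ) /
      ∏ s ∈ range (∑ j, r j), (2*(n:ℝ) - 2*s - 1) := by
  rw [mom_eq hn, dd_prod n _ h]
  have : (dd (2*n - 2 * ∑ j, r j) : ℝ) ≠ 0 := by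
    rw [← Nat.mul_sub]
    exact_mod_cast (dd_pos _).ne'
  rw [mul_div_mul_right _ _ this]

lemma den_pos {n R : ℕ} (h : R ≤ n) : 0 < ∏ s ∈ range R, (2*(n:ℝ) - 2*s - 1) := by
  apply prod_pos
  intro s hs
  have : (s:ℝ) + 1 ≤ n := by simp at hs; exact_mod_cast (by omega : s + 1 ≤ n)
  linarith

lemma mom_bound {k n : ℕ} (hn : k + 1 < n) (r : Fin (k+1) → ℕ) :
    |mom k n r| ≤ ∏ j, (2 * Real.exp 1)^(r j) / ((r j).factorial : ℝ) := by
  by_cases h : ∑ j, r j ≤ n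
  · rw [mom_eq' hn h]
    have hd := den_pos h
    rw [abs_of_nonneg (by positivity), div_le_iff₀ hd]
    calc (((fams k n r).filter (NonConf k n)).card : ℝ) ≤ ((fams k n r).card : ℝ) := by
          exact_mod_cast card_filter_le _ _
      _ = ∏ j, ((2*n).choose (r j) : ℝ) := by rw [fams_card]; push_cast; rfl
      _ ≤ ∏ j, ((2*(n:ℝ))^(r j) / ((r j).factorial : ℝ)) := by
          apply Finset.prod_le_prod
          · intros; positivity
          · intro j _
            have := Nat.choose_le_pow_div (α := ℝ) (r j) (2*n)
            push_cast at this
            exact this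
      _ = (2*(n:ℝ))^(∑ j, r j) / ∏ j, ((r j).factorial : ℝ) := by
          rw [prod_div_distrib, prod_pow_eq_pow_sum]
      _ ≤ ((2 * Real.exp 1)^(∑ j, r j) * ∏ s ∈ range (∑ j, r j), (2*(n:ℝ) - 2*s - 1)) /
            ∏ j, ((r j).factorial : ℝ) := by
          gcongr
          exact pn_bound _ _ h
      _ = _ := by
          rw [prod_div_distrib, prod_pow_eq_pow_sum]; ring
  · rw [mom_zero hn (by omega), abs_zero]
    positivity

lemma mom_support {k n : ℕ} (r : Fin (k+1) → ℕ)
    (h : r ∉ Fintype.piFinset (fun _ : Fin (k+1) => range (2*n+1))) : mom k n r = 0 := by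
  simp only [Fintype.mem_piFinset, mem_range, not_forall] at h
  obtain ⟨j, hj⟩ := h
  unfold mom
  rw [sum_eq_zero, zero_div]
  intro C _
  apply prod_eq_zero (mem_univ j)
  have := pres_card_le n j C
  rw [Nat.choose_eq_zero_of_lt (by omega)]
  simp

noncomputable def conf (k n : ℕ) :
    Finset ((Σ _ : Fin (k+1), Fin (2*n)) × (Σ _ : Fin (k+1), Fin (2*n))) :=
  univ.filter fun p => p.1 ≠ p.2 ∧
    ¬ (p.1.2 ≠ p.2.2 ∧ p.1.2 ≠ enp p.2.2 p.2.1 ∧ enp p.1.2 p.1.1 ≠ enp p.2.2 p.2.1)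

lemma conf_card {k n : ℕ} (hn : k + 1 < n) : (conf k n).card ≤ 3 * ((k+1)^2 * (2*n)) := by
  haveI : Nonempty (Fin (2*n)) := ⟨⟨0, by omega⟩⟩
  let I := Σ _ : Fin (k+1), Fin (2*n)
  let inv : Fin (k+1) → Fin (2*n) → Fin (2*n) := fun j => Function.invFun (fun i => enp i j)
  have hinv : ∀ (j : Fin (k+1)) i, inv j (enp i j) = i := fun j i =>
    Function.leftInverse_invFun (enp_inj hn j (by omega)) i
  let f1 : I × Fin (k+1) → I × I := fun p => (p.1, ⟨p.2, p.1.2⟩)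
  let f2 : I × Fin (k+1) → I × I := fun p => (p.1, ⟨p.2, inv p.2 p.1.2⟩)
  let f3 : I × Fin (k+1) → I × I := fun p => (p.1, ⟨p.2, inv p.2 (enp p.1.2 p.1.1)⟩)
  have hsub : conf k n ⊆ univ.image f1 ∪ (univ.image f2 ∪ univ.image f3) := by
    rintro ⟨⟨j, i⟩, ⟨j', i'⟩⟩ hp
    simp only [conf, mem_filter, mem_univ, true_and] at hp
    have h := hp.2
    by_cases h1 : i = i'
    · apply mem_union_left
      exact mem_image.2 ⟨(⟨j, i⟩, j'), mem_univ _, by simp [f1, h1]⟩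
    · apply mem_union_right
      by_cases h2 : i = enp i' j'
      · apply mem_union_left
        exact mem_image.2 ⟨(⟨j, i⟩, j'), mem_univ _, by simp [f2, h2, hinv]⟩
      · apply mem_union_right
        have h3 : enp i j = enp i' j' := by
          by_contra h3; exact h ⟨h1, h2, h3⟩
        exact mem_image.2 ⟨(⟨j, i⟩, j'), mem_univ _, by simp [f3, h3, hinv]⟩
  have hu : (univ : Finset (I × Fin (k+1))).card = (k+1)^2 * (2*n) := by
    rw [Finset.card_univ, Fintype.card_prod, Fintype.card_sigma]
    simp; ring
  have c1 := (card_image_le (s := univ) (f := f1)).trans hu.le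
  have c2 := (card_image_le (s := univ) (f := f2)).trans hu.le
  have c3 := (card_image_le (s := univ) (f := f3)).trans hu.le
  have := card_le_card hsub
  have := card_union_le (univ.image f1) (univ.image f2 ∪ univ.image f3)
  have := card_union_le (univ.image f2) (univ.image f3)
  omega

lemma bad_card {k n : ℕ} (hn : k + 1 < n) (r : Fin (k+1) → ℕ) :
    ((fams k n r).filter fun S => ¬ NonConf k n S).card * (2*n) ≤
      3 * (k+1)^(∑ j, r j) * (2*n)^(∑ j, r j) := by
  set R := ∑ j, r j with hR
  have key : ∀ S ∈ (fams k n r).filter fun S => ¬ NonConf k n S, ∃ p ∈ conf k n,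
      p.1 ∈ univ.sigma S ∧ p.2 ∈ univ.sigma S := by
    intro S hS
    have h := (mem_filter.1 hS).2
    unfold NonConf at h
    push Not at h
    obtain ⟨t, ht, u, hu, hne, h⟩ := h
    refine ⟨(t, u), ?_, ht, hu⟩
    simp only [conf, mem_filter, mem_univ, true_and]
    exact ⟨hne, fun hh => hh.2.2 (h hh.1 hh.2.1)⟩
  rcases Nat.lt_or_ge R 2 with h2 | h2
  · have : ((fams k n r).filter fun S => ¬ NonConf k n S) = ∅ := by
      rw [eq_empty_iff_forall_notMem]
      intro S hS
      obtain ⟨p, hp, h1, h3⟩ := key S hS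
      have hc := sigma_card (mem_filter.1 hS).1
      have : 1 < (univ.sigma S).card :=
        Finset.one_lt_card.2 ⟨p.1, h1, p.2, h3, (mem_filter.1 hp).2.1⟩
      omega
    rw [this]; simp
  · obtain ⟨Q, hQ⟩ : ∃ Q, R = Q + 2 := ⟨R - 2, by omega⟩
    have hle : ((fams k n r).filter fun S => ¬ NonConf k n S).card ≤
        (conf k n ×ˢ powersetCard Q (univ : Finset (Σ _ : Fin (k+1), Fin (2*n)))).card := by
      let F : ((Σ _ : Fin (k+1), Fin (2*n)) × (Σ _ : Fin (k+1), Fin (2*n))) ×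
          Finset (Σ _ : Fin (k+1), Fin (2*n)) → Finset (Σ _ : Fin (k+1), Fin (2*n)) :=
        fun q => insert q.1.1 (insert q.1.2 q.2)
      have hinj : Function.Injective
          (fun S : Fin (k+1) → Finset (Fin (2*n)) => univ.sigma S) := by
        intro S S' h
        funext j
        ext i
        have := Finset.ext_iff.1 h ⟨j, i⟩
        simpa using this
      rw [← card_image_of_injective _ hinj]
      refine le_trans (card_le_card ?_) (card_image_le (f := F))
      intro T hT
      obtain ⟨S, hS, rfl⟩ := mem_image.1 hT
      obtain ⟨p, hp, h1, h3⟩ := key S hS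
      have hc := sigma_card (mem_filter.1 hS).1
      have hne : p.1 ≠ p.2 := (mem_filter.1 hp).2.1
      have h3' : p.2 ∈ (univ.sigma S).erase p.1 := mem_erase.2 ⟨hne.symm, h3⟩
      refine mem_image.2 ⟨(p, ((univ.sigma S).erase p.1).erase p.2), ?_, ?_⟩
      · rw [mem_product]
        refine ⟨hp, mem_powersetCard.2 ⟨subset_univ _, ?_⟩⟩
        dsimp only
        rw [card_erase_of_mem h3', card_erase_of_mem h1]
        omega
      · simp only [F]
        rw [insert_erase h3', insert_erase h1]
    rw [card_product, card_powersetCard] at hle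
    have hu : (univ : Finset (Σ _ : Fin (k+1), Fin (2*n))).card = (k+1) * (2*n) := by
      rw [Finset.card_univ, Fintype.card_sigma]; simp
    rw [hu] at hle
    have h5 := Nat.choose_le_pow ((k+1) * (2*n)) Q
    calc _ ≤ ((3 * ((k+1)^2 * (2*n))) * ((k+1) * (2*n))^Q) * (2*n) := by
          gcongr
          exact hle.trans (Nat.mul_le_mul (conf_card hn) h5)
      _ = _ := by rw [hQ, mul_pow (k+1)]; ring

lemma mom_lim {k : ℕ} (r : Fin (k+1) → ℕ) :
    Tendsto (fun n => mom k n r) atTop (nhds (∏ j, 1 / ((r j).factorial : ℝ))) := by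
  set R := ∑ j, r j with hR
  have hbad : Tendsto (fun n : ℕ => (((fams k n r).filter fun S => ¬ NonConf k n S).card : ℝ) /
      (2*(n:ℝ))^R) atTop (nhds 0) := by
    have hK : Tendsto (fun n : ℕ => (3 * ((k:ℝ)+1)^R) / (2*(n:ℝ))) atTop (nhds 0) :=
      Tendsto.const_div_atTop (tendsto_natCast_atTop_atTop.const_mul_atTop (by norm_num)) _
    refine squeeze_zero' (Eventually.of_forall fun n => by positivity) ?_ hK
    filter_upwards [eventually_gt_atTop (k+1)] with n hn
    have h := bad_card hn r
    have hn0 : (0:ℝ) < n := by exact_mod_cast (by omega : 0 < n)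
    rw [div_le_div_iff₀ (by positivity) (by positivity)]
    exact_mod_cast h
  have hmain : Tendsto (fun n : ℕ => ((fams k n r).card : ℝ) / (2*(n:ℝ))^R) atTop
      (nhds (∏ j, 1 / ((r j).factorial : ℝ))) := by
    have : ∀ n : ℕ, ((fams k n r).card : ℝ) / (2*(n:ℝ))^R =
        ∏ j, (((2*n).choose (r j) : ℝ) / (2*(n:ℝ))^(r j)) := by
      intro n
      rw [fams_card, prod_div_distrib, prod_pow_eq_pow_sum]
      push_cast
      rfl
    simp only [this]
    exact tendsto_finsetProd _ fun j _ => choose_lim (r j)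
  have h := (hmain.sub hbad).mul (pn_lim R)
  rw [sub_zero, mul_one] at h
  refine h.congr' ?_
  filter_upwards [eventually_gt_atTop (k+1), eventually_ge_atTop R] with n hn hnR
  rw [mom_eq' hn hnR]
  have hc := Finset.card_filter_add_card_filter_not (s := fams k n r) (NonConf k n)
  have hc' : (((fams k n r).filter (NonConf k n)).card : ℝ) =
      ((fams k n r).card : ℝ) - (((fams k n r).filter fun S => ¬ NonConf k n S).card : ℝ) := by
    rw [← hc]; push_cast; ring
  have hn0 : (0:ℝ) < n := by exact_mod_cast (by omega : 0 < n)
  have hd := den_pos hnR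
  rw [hc', ← sub_div, div_mul_div_cancel₀ (by positivity)]

theorem stmt5 (k : ℕ) (m : ℕ → ℕ) :
    Filter.Tendsto
      (fun n : ℕ => prob n (fun C => ∀ j ≤ k, lengthCount n j C = m j))
      Filter.atTop
      (nhds (∏ j ∈ Finset.range (k+1), Real.exp (-1) / ((m j).factorial : ℝ))) := by
  rw [Finset.prod_range]
  refine moment_method (fun j : Fin (k+1) => m j) _ (mom k) (2 * Real.exp 1) (by positivity)
    ?_ ?_ ?_ mom_lim
  · filter_upwards [eventually_gt_atTop (k+1)] with n hn using prob_eq hn m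
  · exact Eventually.of_forall fun n r hr => mom_support r hr
  · filter_upwards [eventually_gt_atTop (k+1)] with n hn r using mom_bound hn r
end

section
/- Fix a positive integer k and let R_k denote the number of chords in the k-core of the uniformly random chord diagram C_n of size n. Then n − R_k converges in distribution, as n→∞, to a Poisson random variable with mean k; that is, for every integer m ≥ 0, lim_{n→∞} P(n − R_k = m) = e^{−k} k^m / m!. -/
open scoped Classical
open Finset Filter

/-- Clockwise distance from `x` to `y`. -/
def cdist {N : ℕ} (x y : Fin N) : ℕ := if (x:ℕ) ≤ y then (y:ℕ) - x else N + y - x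

lemma cdist_lt {N : ℕ} (x y : Fin N) : cdist x y < N := by
  have := x.2; have := y.2
  unfold cdist; split_ifs <;> omega

lemma cdist_add {N : ℕ} (x y : Fin N) (h : x ≠ y) : cdist x y + cdist y x = N := by
  have := x.2; have := y.2
  have h' : (x:ℕ) ≠ y := fun h' => h (Fin.ext h')
  unfold cdist; split_ifs <;> omega

lemma cdist_pos {N : ℕ} (x y : Fin N) (h : x ≠ y) : 1 ≤ cdist x y := by
  have := cdist_add x y h
  have := cdist_lt y x
  omega

lemma cdist_inj {N : ℕ} (x y z : Fin N) (h : cdist x y = cdist x z) : y = z := by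
  have := x.2; have := y.2; have := z.2
  apply Fin.ext
  unfold cdist at h; split_ifs at h <;> omega

lemma cdist_inj' {N : ℕ} (x y z : Fin N) (h : cdist y x = cdist z x) : y = z := by
  have := x.2; have := y.2; have := z.2
  apply Fin.ext
  unfold cdist at h; split_ifs at h <;> omega

lemma cdist_surj {N : ℕ} (x : Fin N) (j : ℕ) (hj : j < N) : ∃ y, cdist x y = j := by
  have := x.2
  by_cases h : (x:ℕ) + j < N
  · exact ⟨⟨x + j, h⟩, by simp [cdist]⟩
  · refine ⟨⟨x + j - N, by omega⟩, ?_⟩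
    unfold cdist
    simp only
    split_ifs <;> omega

lemma card_fwd {N : ℕ} (x : Fin N) (k : ℕ) (hk : k < N) :
    (univ.filter fun z : Fin N => 1 ≤ cdist x z ∧ cdist x z ≤ k).card = k := by
  have : (Finset.Icc 1 k).card = k := by simp
  rw [← this]
  apply Finset.card_nbij (fun z => cdist x z)
  · intro z hz
    simpa using hz
  · intro z _ w _ h
    exact cdist_inj _ _ _ h
  · intro j hj
    simp only [coe_Icc, Set.mem_Icc] at hj
    obtain ⟨y, hy⟩ := cdist_surj x j (by omega)
    exact ⟨y, by simp [hy, hj], hy⟩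

lemma card_fwd_le {N : ℕ} (x : Fin N) (k : ℕ) :
    (univ.filter fun z : Fin N => 1 ≤ cdist x z ∧ cdist x z ≤ k).card ≤ k := by
  have : (Finset.Icc 1 k).card = k := by simp
  conv_rhs => rw [← this]
  apply Finset.card_le_card_of_injOn (fun z => cdist x z)
  · intro z hz
    simpa using hz
  · intro z _ w _ h
    exact cdist_inj _ _ _ h

lemma card_bwd_le {N : ℕ} (x : Fin N) (k : ℕ) :
    (univ.filter fun z : Fin N => 1 ≤ cdist z x ∧ cdist z x ≤ k).card ≤ k := by
  have : (Finset.Icc 1 k).card = k := by simp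
  conv_rhs => rw [← this]
  apply Finset.card_le_card_of_injOn (fun z => cdist z x)
  · intro z hz
    simpa using hz
  · intro z _ w _ h
    exact cdist_inj' _ _ _ h

lemma CD_inj {n : ℕ} (C : ChordDiagram n) : Function.Injective C.1 := by
  intro x y h
  have := congrArg C.1 h
  rwa [C.2.1, C.2.1] at this

lemma card_half {n : ℕ} (C : ChordDiagram n) (T W : Finset (Fin (2*n)))
    (hWT : W ⊆ T) (hT : ∀ x ∈ T, C.1 x ∈ T) (hW : ∀ x ∈ T, Xor (x ∈ W) (C.1 x ∈ W)) :
    2 * W.card = T.card := by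
  have hdisj : Disjoint W (W.image C.1) := by
    rw [Finset.disjoint_left]
    intro x hx hx'
    obtain ⟨y, hy, rfl⟩ := Finset.mem_image.1 hx'
    rcases hW y (hWT hy) with h | h
    · exact h.2 hx
    · exact h.2 hy
  have hun : W ∪ W.image C.1 = T := by
    ext x
    simp only [mem_union, mem_image]
    constructor
    · rintro (h | ⟨y, hy, rfl⟩)
      · exact hWT h
      · exact hT _ (hWT hy)
    · intro h
      rcases hW x h with h | h
      · exact Or.inl h.1
      · exact Or.inr ⟨_, h.1, C.2.1 x⟩
  rw [← hun, Finset.card_union_of_disjoint hdisj, Finset.card_image_of_injective _ (CD_inj C)]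
  omega

lemma card_lt_half {n : ℕ} (C : ChordDiagram n) (T : Finset (Fin (2*n)))
    (hT : ∀ x ∈ T, C.1 x ∈ T) : 2 * (T.filter fun x => x < C.1 x).card = T.card := by
  apply card_half C T _ (Finset.filter_subset _ _) hT
  intro x hx
  have h1 := C.2.1 x
  have h2 := C.2.2 x
  simp only [mem_filter, hx, hT x hx, true_and, h1]
  rcases lt_or_gt_of_ne h2 with h | h
  · exact Or.inr ⟨h, not_lt.2 h.le⟩
  · exact Or.inl ⟨h, not_lt.2 h.le⟩

/-- open clockwise arc -/
def InArc {N : ℕ} (x y z : Fin N) : Prop := 1 ≤ cdist x z ∧ cdist x z < cdist x y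

lemma crosses_iff {n : ℕ} (C : ChordDiagram n) (x u : Fin (2*n)) :
    Crosses C x u ↔ Xor (InArc x (C.1 x) u) (InArc x (C.1 x) (C.1 u)) := by
  have h1 := C.2.1 x
  have h2 := C.2.2 x
  have h4 := C.2.2 u
  have e1 : C.1 u = x ↔ u = C.1 x := by
    constructor
    · rintro rfl; exact (C.2.1 u).symm
    · rintro rfl; exact h1
  have e2 : C.1 u = C.1 x ↔ u = x := (CD_inj C).eq_iff
  clear h1
  unfold Crosses Between InArc cdist
  generalize C.1 u = v at *
  generalize C.1 x = y at *
  have := x.2; have := y.2; have := u.2; have := v.2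
  simp only [Fin.ext_iff, Fin.lt_def, Fin.coe_min, Fin.coe_max, ne_eq, Xor', Xor] at *
  rcases lt_or_ge (x:ℕ) y with h | h
  · rw [min_eq_left h.le, max_eq_right h.le]
    split_ifs <;> omega
  · rw [min_eq_right h, max_eq_left h]
    split_ifs <;> omega

lemma crosses_symm {n : ℕ} (C : ChordDiagram n) (x u : Fin (2*n)) :
    Crosses C (C.1 x) u ↔ Crosses C x u := by
  unfold Crosses Between
  rw [C.2.1, min_comm, max_comm]

lemma crosses_symm' {n : ℕ} (C : ChordDiagram n) (x u : Fin (2*n)) :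
    Crosses C x (C.1 u) ↔ Crosses C x u := by
  unfold Crosses Xor'
  rw [C.2.1, xor_comm]

lemma degreeIn_symm {n : ℕ} (C : ChordDiagram n) (S : Finset (Fin (2*n))) (x : Fin (2*n)) :
    degreeIn C S (C.1 x) = degreeIn C S x := by
  unfold degreeIn
  simp only [crosses_symm]

lemma degreeIn_eq {n : ℕ} (C : ChordDiagram n) (S : Finset (Fin (2*n)))
    (hS : ∀ x ∈ S, C.1 x ∈ S) (x : Fin (2*n)) :
    degreeIn C S x =
      (S.filter fun u => InArc x (C.1 x) u ∧ ¬ InArc x (C.1 x) (C.1 u)).card := by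
  have hT : ∀ u ∈ S.filter (fun u => Crosses C x u), C.1 u ∈ S.filter (fun u => Crosses C x u) := by
    intro u hu
    simp only [mem_filter, crosses_symm'] at hu ⊢
    exact ⟨hS u hu.1, hu.2⟩
  have h1 := card_lt_half C (S.filter (fun u => Crosses C x u)) hT
  have h2 := card_half C (S.filter (fun u => Crosses C x u))
    (S.filter fun u => InArc x (C.1 x) u ∧ ¬ InArc x (C.1 x) (C.1 u))
    (by
      intro u hu
      simp only [mem_filter, crosses_iff] at hu ⊢
      exact ⟨hu.1, Or.inl hu.2⟩) hT
    (by
      intro u hu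
      simp only [mem_filter, crosses_iff] at hu
      have := hS u hu.1
      simp only [mem_filter, hu.1, this, C.2.1]
      rcases hu.2 with h | h
      · exact Or.inl ⟨⟨trivial, h⟩, fun h' => h.2 h'.2.1⟩
      · exact Or.inr ⟨⟨trivial, h⟩, fun h' => h.2 h'.2.1⟩)
  unfold degreeIn
  rw [Finset.filter_filter] at h1
  simp only [and_comm] at h1 h2 ⊢
  omega

/-- The chord of `x` has at most `k` as one of its two clockwise distances. -/
def Short {n : ℕ} (C : ChordDiagram n) (k : ℕ) (x : Fin (2*n)) : Prop :=
  cdist x (C.1 x) ≤ k ∨ cdist (C.1 x) x ≤ k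

lemma short_symm {n : ℕ} (C : ChordDiagram n) (k : ℕ) (x : Fin (2*n)) :
    Short C k (C.1 x) ↔ Short C k x := by
  unfold Short
  rw [C.2.1, or_comm]

/-- number of short chords -/
noncomputable def Zc (n k : ℕ) (C : ChordDiagram n) : ℕ :=
  (univ.filter fun x : Fin (2*n) => cdist x (C.1 x) ≤ k).card

lemma two_Zc {n k : ℕ} (hn : k < n) (C : ChordDiagram n) :
    2 * Zc n k C = (univ.filter fun x : Fin (2*n) => Short C k x).card := by
  apply card_half C
  · intro x hx
    simp only [mem_filter, mem_univ, true_and] at hx ⊢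
    exact Or.inl hx
  · intro x hx
    simp only [mem_filter, mem_univ, true_and, short_symm] at hx ⊢
    exact hx
  · intro x hx
    simp only [mem_filter, mem_univ, true_and, C.2.1] at hx ⊢
    have := cdist_add _ _ (C.2.2 x)
    rcases hx with h | h
    · exact Or.inl ⟨h, by omega⟩
    · exact Or.inr ⟨h, by omega⟩

lemma short_not_core {n k : ℕ} (hk : 1 ≤ k) (C : ChordDiagram n) (S : Finset (Fin (2*n)))
    (hS : IsCore C k S) (x : Fin (2*n)) (hx : x ∈ S) : ¬ Short C k x := by
  have key : ∀ y ∈ S, ¬ cdist y (C.1 y) ≤ k := by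
    intro y hy hle
    have h1 := hS.2 y hy
    rw [degreeIn_eq C S hS.1] at h1
    have h2 : (S.filter fun u => InArc y (C.1 y) u ∧ ¬ InArc y (C.1 y) (C.1 u)).card ≤ k - 1 := by
      refine le_trans (Finset.card_le_card ?_) (card_fwd_le y (k-1))
      intro u hu
      simp only [mem_filter, mem_univ, true_and] at hu ⊢
      have h3 := hu.2.1
      unfold InArc at h3
      omega
    omega
  rintro (h | h)
  · exact key x hx h
  · apply key (C.1 x) (hS.1 x hx)
    rwa [C.2.1]

lemma kCore_eq {n k : ℕ} (hk : 1 ≤ k) (C : ChordDiagram n)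
    (hS : IsCore C k (univ.filter fun x => ¬ Short C k x)) :
    kCore n k C = univ.filter fun x => ¬ Short C k x := by
  ext x
  simp only [kCore, mem_filter, mem_univ, true_and]
  constructor
  · rintro ⟨S, h, hx⟩
    exact short_not_core hk C S h x hx
  · intro hx
    exact ⟨_, hS, by simpa using hx⟩

lemma coreSize_eq {n k : ℕ} (hk : 1 ≤ k) (hn : k < n) (C : ChordDiagram n)
    (hS : IsCore C k (univ.filter fun x => ¬ Short C k x)) :
    n - kCoreSize n k C = Zc n k C := by
  have h1 := two_Zc hn C
  unfold kCoreSize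
  rw [kCore_eq hk C hS]
  have h2 := card_lt_half C _ hS.1
  have h3 := Finset.card_filter_add_card_filter_not (s := (univ : Finset (Fin (2*n))))
    (fun x => Short C k x)
  simp only [Finset.card_univ, Fintype.card_fin] at h3
  omega

/-- closed under the involution -/
def ClosedSet {n : ℕ} (C : ChordDiagram n) (B : Finset (Fin (2*n))) : Prop :=
  ∀ x ∈ B, C.1 x ∈ B

/-- window around `x` -/
noncomputable def Win {n : ℕ} (k L : ℕ) (x : Fin (2*n)) : Finset (Fin (2*n)) :=
  univ.filter fun z => cdist x z ≤ L + k ∨ cdist z x ≤ k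

noncomputable def arcSet {n : ℕ} (x y : Fin (2*n)) : Finset (Fin (2*n)) :=
  univ.filter fun z => InArc x y z

def Bad1 (n k L : ℕ) (C : ChordDiagram n) : Prop :=
  ∃ x : Fin (2*n), ∃ y ∈ Win k L x, ∃ u ∈ Win k L x, ∃ v ∈ Win k L x,
    ({x, y, u, v} : Finset (Fin (2*n))).card = 4 ∧ ClosedSet C {x, y, u, v}

def Bad2 (n k r : ℕ) (C : ChordDiagram n) : Prop :=
  ∃ x y : Fin (2*n), ∃ T : Finset (Fin (2*n)), T.card < 3 * k ∧
    2 * r ≤ (arcSet x y \ T).card ∧ (arcSet x y \ T).card ≤ n ∧ ClosedSet C (arcSet x y \ T)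

lemma card_arcSet {n : ℕ} (x y : Fin (2*n)) : (arcSet x y).card = cdist x y - 1 := by
  have h := cdist_lt x y
  have h2 := card_fwd x (cdist x y - 1) (by omega)
  refine Eq.trans (congrArg _ ?_) h2
  ext z
  simp only [arcSet, Finset.mem_filter, Finset.mem_univ, true_and]
  unfold InArc
  constructor
  · rintro ⟨h3, h4⟩
    exact ⟨h3, by omega⟩
  · rintro ⟨h3, h4⟩
    exact ⟨h3, by omega⟩

lemma tri_fwd {N k d : ℕ} (x u v : Fin N) (h1 : cdist x u ≤ d) (h2 : cdist u v ≤ k) :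
    cdist x v ≤ d + k := by
  have := x.2; have := u.2; have := v.2
  unfold cdist at *
  split_ifs at * <;> omega

lemma tri_bwd {N k d : ℕ} (x u v : Fin N) (h1 : cdist x u ≤ d) (h2 : cdist v u ≤ k) :
    cdist x v ≤ d ∨ cdist v x ≤ k := by
  have := x.2; have := u.2; have := v.2
  unfold cdist at *
  split_ifs at * <;> omega

lemma out_fwd {N k : ℕ} (x y u v : Fin N) (h : InArc x y u) (h' : ¬ InArc x y v) (hvx : v ≠ x)
    (h2 : cdist u v ≤ k) : cdist u y ≤ k := by
  have hvx' : (v:ℕ) ≠ x := fun h => hvx (Fin.ext h)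
  have := x.2; have := u.2; have := v.2; have := y.2
  unfold InArc cdist at *
  split_ifs at * <;> omega

lemma out_bwd {N k : ℕ} (x y u v : Fin N) (h : InArc x y u) (h' : ¬ InArc x y v) (hvx : v ≠ x)
    (h2 : cdist v u ≤ k) : cdist x u ≤ k := by
  have hvx' : (v:ℕ) ≠ x := fun h => hvx (Fin.ext h)
  have := x.2; have := u.2; have := v.2; have := y.2
  unfold InArc cdist at *
  split_ifs at * <;> omega

lemma not_inArc_left {N : ℕ} (x y : Fin N) : ¬ InArc x y x := by
  unfold InArc cdist; simp

lemma not_inArc_right {N : ℕ} (x y : Fin N) : ¬ InArc x y y := by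
  unfold InArc; simp

lemma deg_small {n k L : ℕ} (C : ChordDiagram n) (hb : ¬ Bad1 n k L C) (x : Fin (2*n))
    (h1 : k + 1 ≤ cdist x (C.1 x)) (h2 : cdist x (C.1 x) ≤ L) :
    k ≤ ((univ.filter fun u => ¬ Short C k u).filter
      fun u => InArc x (C.1 x) u ∧ ¬ InArc x (C.1 x) (C.1 u)).card := by
  have hwin : ∀ u v : Fin (2*n), cdist x u ≤ L → (cdist u v ≤ k ∨ cdist v u ≤ k) →
      v ∈ Win k L x := by
    intro u v hu hv
    simp only [Win, mem_filter, mem_univ, true_and]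
    rcases hv with hv | hv
    · exact Or.inl (tri_fwd x u v hu hv)
    · rcases tri_bwd x u v hu hv with h | h
      · left; omega
      · exact Or.inr h
  have hwin0 : ∀ u : Fin (2*n), cdist x u ≤ L → u ∈ Win k L x := by
    intro u hu
    simp only [Win, mem_filter, mem_univ, true_and]
    left; omega
  have key : ∀ u, InArc x (C.1 x) u → C.1 u ∉ Win k L x := by
    intro u hu hw
    apply hb
    have hux : u ≠ x := by rintro rfl; exact not_inArc_left _ _ hu
    have huy : u ≠ C.1 x := by rintro rfl; exact not_inArc_right _ _ hu
    have hx := C.2.2 x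
    have hu' := C.2.2 u
    have h3 : C.1 u ≠ x := by
      rintro h; apply huy; rw [← h, C.2.1]
    have h4 : C.1 u ≠ C.1 x := fun h => hux (CD_inj C h)
    refine ⟨x, C.1 x, hwin0 _ h2, u, hwin0 _ (by have := hu.2; omega), C.1 u, hw, ?_, ?_⟩
    · rw [Finset.card_eq_of_equiv_fin]
      apply Fintype.equivFinOfCardEq
      simp only [Fintype.card_coe]
      rw [Finset.card_insert_of_notMem, Finset.card_insert_of_notMem,
        Finset.card_insert_of_notMem, Finset.card_singleton]
      · simpa using hu'.symm
      · simp [huy.symm, h4.symm]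
      · simp [hx.symm, hux.symm, h3.symm]
    · intro z hz
      simp only [mem_insert, mem_singleton] at hz ⊢
      rcases hz with rfl | rfl | rfl | rfl <;> simp [C.2.1]
  have hsub : arcSet x (C.1 x) ⊆ ((univ.filter fun u => ¬ Short C k u).filter
      fun u => InArc x (C.1 x) u ∧ ¬ InArc x (C.1 x) (C.1 u)) := by
    intro u hu
    simp only [arcSet, mem_filter, mem_univ, true_and] at hu ⊢
    have huL : cdist x u ≤ L := by have := hu.2; omega
    refine ⟨?_, hu, ?_⟩
    · intro hs
      exact key u hu (hwin u _ huL hs)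
    · intro h'
      exact key u hu (hwin0 _ (by have := h'.2; omega))
  have := Finset.card_le_card hsub
  rw [card_arcSet] at this
  omega

lemma deg_large {n k r : ℕ} (C : ChordDiagram n) (hb : ¬ Bad2 n k r C) (x : Fin (2*n))
    (h1 : 2 * r + 3 * k + 1 ≤ cdist x (C.1 x)) (h2 : cdist x (C.1 x) ≤ n) :
    k ≤ ((univ.filter fun u => ¬ Short C k u).filter
      fun u => InArc x (C.1 x) u ∧ ¬ InArc x (C.1 x) (C.1 u)).card := by
  set T := (univ.filter fun u => InArc x (C.1 x) u ∧ ¬ InArc x (C.1 x) (C.1 u)) with hT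
  have hTc : 3 * k ≤ T.card := by
    by_contra hlt
    apply hb
    have hTA : T ⊆ arcSet x (C.1 x) := by
      intro u hu
      simp only [hT, arcSet, mem_filter, mem_univ, true_and] at hu ⊢
      exact hu.1
    have hc := Finset.card_sdiff_of_subset hTA
    rw [card_arcSet] at hc
    refine ⟨x, C.1 x, T, by omega, by omega, by omega, ?_⟩
    intro u hu
    simp only [hT, arcSet, Finset.mem_sdiff, mem_filter, mem_univ, true_and, C.2.1] at hu ⊢
    tauto
  have hsub : T ⊆ ((univ.filter fun u => ¬ Short C k u).filter
      fun u => InArc x (C.1 x) u ∧ ¬ InArc x (C.1 x) (C.1 u)) ∪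
      ((univ.filter fun z => 1 ≤ cdist x z ∧ cdist x z ≤ k) ∪
       (univ.filter fun z => 1 ≤ cdist z (C.1 x) ∧ cdist z (C.1 x) ≤ k)) := by
    intro u hu
    simp only [hT, mem_union, mem_filter, mem_univ, true_and] at hu ⊢
    by_cases hs : Short C k u
    · right
      have hux : u ≠ x := by rintro rfl; exact not_inArc_left _ _ hu.1
      have huy : u ≠ C.1 x := by rintro rfl; exact not_inArc_right _ _ hu.1
      have h3 : C.1 u ≠ x := by
        rintro h; apply huy; rw [← h, C.2.1]
      rcases hs with hs | hs
      · right
        exact ⟨cdist_pos _ _ huy, out_fwd x _ u _ hu.1 hu.2 h3 hs⟩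
      · left
        exact ⟨cdist_pos _ _ hux.symm, out_bwd x _ u _ hu.1 hu.2 h3 hs⟩
    · left; exact ⟨hs, hu⟩
  have h5 := Finset.card_le_card hsub
  have h6 := Finset.card_union_le ((univ.filter fun u => ¬ Short C k u).filter
      fun u => InArc x (C.1 x) u ∧ ¬ InArc x (C.1 x) (C.1 u))
      ((univ.filter fun z => 1 ≤ cdist x z ∧ cdist x z ≤ k) ∪
       (univ.filter fun z => 1 ≤ cdist z (C.1 x) ∧ cdist z (C.1 x) ≤ k))
  have h7 := Finset.card_union_le (univ.filter fun z => 1 ≤ cdist x z ∧ cdist x z ≤ k)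
       (univ.filter fun z => 1 ≤ cdist z (C.1 x) ∧ cdist z (C.1 x) ≤ k)
  have h8 := card_fwd_le x k
  have h9 := card_bwd_le (C.1 x) k
  omega

lemma long_core {n k r : ℕ} (C : ChordDiagram n) (hb1 : ¬ Bad1 n k (2 * r + 3 * k) C)
    (hb2 : ¬ Bad2 n k r C) : IsCore C k (univ.filter fun x => ¬ Short C k x) := by
  have hcl : ∀ x ∈ (univ.filter fun x => ¬ Short C k x),
      C.1 x ∈ (univ.filter fun x => ¬ Short C k x) := by
    intro x hx
    simpa [short_symm] using hx
  refine ⟨hcl, ?_⟩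
  have key : ∀ x, ¬ Short C k x → cdist x (C.1 x) ≤ n →
      k ≤ degreeIn C (univ.filter fun x => ¬ Short C k x) x := by
    intro x hx hn
    rw [degreeIn_eq C _ hcl]
    unfold Short at hx
    by_cases h : cdist x (C.1 x) ≤ 2 * r + 3 * k
    · exact deg_small C hb1 x (by omega) h
    · exact deg_large C hb2 x (by omega) hn
  intro x hx
  simp only [mem_filter, mem_univ, true_and] at hx
  by_cases hn : cdist x (C.1 x) ≤ n
  · exact key x hx hn
  · rw [← degreeIn_symm]
    apply key (C.1 x) (by rwa [short_symm])
    have := cdist_add _ _ (C.2.2 x)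
    rw [C.2.1]
    omega

lemma CD_card_pos (n : ℕ) : 0 < (Finset.univ : Finset (ChordDiagram n)).card := by
  apply Finset.card_pos.2
  refine ⟨⟨Fin.rev, fun i => Fin.rev_rev i, fun i h => ?_⟩, Finset.mem_univ _⟩
  have := congrArg Fin.val h
  rw [Fin.val_rev] at this
  omega

lemma prob_nonneg (n : ℕ) (E : ChordDiagram n → Prop) : 0 ≤ prob n E := by
  unfold prob; positivity

lemma prob_mono {n : ℕ} {E F : ChordDiagram n → Prop} (h : ∀ C, E C → F C) :
    prob n E ≤ prob n F := by
  unfold prob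
  gcongr with C
  intro hC
  exact h _ hC

lemma prob_congr {n : ℕ} {E F : ChordDiagram n → Prop} (h : ∀ C, E C ↔ F C) :
    prob n E = prob n F :=
  le_antisymm (prob_mono fun C => (h C).1) (prob_mono fun C => (h C).2)

lemma prob_true (n : ℕ) : prob n (fun _ => True) = 1 := by
  unfold prob
  have := CD_card_pos n
  rw [Finset.filter_true, div_self]
  positivity

lemma prob_le_one (n : ℕ) (E : ChordDiagram n → Prop) : prob n E ≤ 1 := by
  rw [← prob_true n]
  exact prob_mono fun _ _ => trivial

lemma prob_or_le {n : ℕ} (E F : ChordDiagram n → Prop) :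
    prob n (fun C => E C ∨ F C) ≤ prob n E + prob n F := by
  unfold prob
  rw [← add_div]
  gcongr
  have h := Finset.card_union_le (univ.filter E) (univ.filter F)
  refine le_trans (b := ((univ.filter E ∪ univ.filter F).card : ℝ)) ?_ (by exact_mod_cast h)
  refine Nat.cast_le.2 (Finset.card_le_card ?_)
  intro C hC
  simpa using hC

lemma prob_exists_le {n : ℕ} {ι : Type*} (s : Finset ι) (E : ι → ChordDiagram n → Prop) :
    prob n (fun C => ∃ i ∈ s, E i C) ≤ ∑ i ∈ s, prob n (E i) := by
  induction s using Finset.induction_on with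
  | empty => simp [prob]
  | insert a s ha ih =>
    rw [Finset.sum_insert ha]
    refine le_trans (prob_mono (F := fun C => E a C ∨ ∃ i ∈ s, E i C) ?_)
      (le_trans (prob_or_le _ _) (by gcongr))
    rintro C ⟨i, hi, h⟩
    rcases Finset.mem_insert.1 hi with rfl | hi
    · exact Or.inl h
    · exact Or.inr ⟨i, hi, h⟩

lemma prob_exists_le_mul {n : ℕ} {ι : Type*} (s : Finset ι) (E : ι → ChordDiagram n → Prop)
    (c : ℝ) (h : ∀ i ∈ s, prob n (E i) ≤ c) :
    prob n (fun C => ∃ i ∈ s, E i C) ≤ s.card * c := by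
  refine (prob_exists_le s E).trans ?_
  have := Finset.sum_le_card_nsmul s _ c h
  simpa using this

/-- conjugation of a chord diagram by a permutation -/
def conjCD {n : ℕ} (σ : Equiv.Perm (Fin (2*n))) (C : ChordDiagram n) : ChordDiagram n :=
  ⟨fun x => σ (C.1 (σ.symm x)), by
    constructor
    · intro i; simp [C.2.1]
    · intro i h
      apply C.2.2 (σ.symm i)
      rw [Equiv.eq_symm_apply]; exact h⟩

lemma conjCD_symm {n : ℕ} (σ : Equiv.Perm (Fin (2*n))) (C : ChordDiagram n) :
    conjCD σ.symm (conjCD σ C) = C := by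
  apply Subtype.ext
  funext x
  simp [conjCD]

lemma exists_perm {N : ℕ} (B B' : Finset (Fin N)) (h : B.card = B'.card) :
    ∃ σ : Equiv.Perm (Fin N), ∀ x, σ x ∈ B' ↔ x ∈ B := by
  have e := Finset.equivOfCardEq h
  refine ⟨e.extendSubtype, fun x => ?_⟩
  constructor
  · intro hx
    by_contra hn
    exact e.extendSubtype_not_mem x hn hx
  · intro hx
    exact e.extendSubtype_mem x hx

lemma closed_card_le {n : ℕ} (B B' : Finset (Fin (2*n))) (h : B.card = B'.card) :
    (univ.filter fun C : ChordDiagram n => ClosedSet C B).card ≤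
    (univ.filter fun C : ChordDiagram n => ClosedSet C B').card := by
  obtain ⟨σ, hσ⟩ := exists_perm B B' h
  apply Finset.card_le_card_of_injOn (conjCD σ)
  · intro C hC
    rw [Finset.mem_coe, Finset.mem_filter] at hC ⊢
    refine ⟨Finset.mem_univ _, ?_⟩
    have hC := hC.2
    unfold ClosedSet at hC ⊢
    intro x hx
    simp only [conjCD]
    rw [hσ]
    apply hC
    rw [← hσ]
    simpa using hx
  · intro C _ D _ h
    rw [← conjCD_symm σ C, ← conjCD_symm σ D, h]

lemma card_closed_sets {n b : ℕ} (C : ChordDiagram n) :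
    ((powersetCard (2*b) univ).filter fun B => ClosedSet C B).card ≤ n.choose b := by
  have h1 := card_lt_half C univ (fun _ _ => mem_univ _)
  simp only [Finset.card_univ, Fintype.card_fin] at h1
  have h2 : (univ.filter fun x => x < C.1 x).card = n := by omega
  have h3 := Finset.card_powersetCard b (univ.filter fun x => x < C.1 x)
  rw [h2] at h3
  rw [← h3]
  apply Finset.card_le_card_of_injOn (fun B => B.filter fun x => x < C.1 x)
  · intro B hB
    simp only [Finset.mem_coe, Finset.mem_filter, mem_powersetCard, subset_univ, true_and] at hB
    have := card_lt_half C B hB.2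
    simp only [mem_coe, mem_powersetCard]
    refine ⟨Finset.filter_subset_filter _ (Finset.subset_univ _), by omega⟩
  · have key : ∀ B D : Finset (Fin (2*n)), ClosedSet C B → ClosedSet C D →
        (B.filter fun x => x < C.1 x) = (D.filter fun x => x < C.1 x) → B ⊆ D := by
      intro B D hB hD h x hx
      rcases lt_or_gt_of_ne (C.2.2 x) with hlt | hlt
      · have : C.1 x ∈ B.filter fun x => x < C.1 x := by
          simp [C.2.1, hlt, hB x hx]
        rw [h] at this
        have := hD _ (Finset.mem_filter.1 this).1
        rwa [C.2.1] at this
      · have : x ∈ B.filter fun x => x < C.1 x := by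
          simp [hlt, hx]
        rw [h] at this
        exact (Finset.mem_filter.1 this).1
    intro B hB D hD h
    simp only [Finset.mem_coe, Finset.mem_filter] at hB hD
    exact Finset.Subset.antisymm (key B D hB.2 hD.2 h) (key D B hD.2 hB.2 h.symm)

lemma choose_sq_le (n b : ℕ) : n.choose b * n.choose b ≤ (2*n).choose (2*b) := by
  rw [two_mul n, Nat.add_choose_eq]
  exact Finset.single_le_sum (f := fun ij : ℕ × ℕ => n.choose ij.1 * n.choose ij.2)
    (fun _ _ => Nat.zero_le _) (a := (b, b)) (by simp [two_mul])

lemma prob_closed_le {n b : ℕ} (B : Finset (Fin (2*n))) (hB : B.card = 2 * b) :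
    prob n (fun C => ClosedSet C B) ≤ 1 / (n.choose b : ℝ) := by
  have hbn : b ≤ n := by
    have := Finset.card_le_univ B
    simp only [Fintype.card_fin] at this
    omega
  have hpos := Nat.choose_pos hbn
  have hN := CD_card_pos n
  have h1 : (univ.filter fun C : ChordDiagram n => ClosedSet C B).card * (2*n).choose (2*b) ≤
      (univ : Finset (ChordDiagram n)).card * n.choose b := by
    calc _ = ∑ B' ∈ powersetCard (2*b) (univ : Finset (Fin (2*n))),
          (univ.filter fun C : ChordDiagram n => ClosedSet C B).card := by
            rw [Finset.sum_const, Finset.card_powersetCard]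
            simp [mul_comm]
      _ ≤ ∑ B' ∈ powersetCard (2*b) (univ : Finset (Fin (2*n))),
          (univ.filter fun C : ChordDiagram n => ClosedSet C B').card := by
            apply Finset.sum_le_sum
            intro B' hB'
            apply closed_card_le
            rw [hB, (Finset.mem_powersetCard.1 hB').2]
      _ = ∑ C : ChordDiagram n, ((powersetCard (2*b) univ).filter fun B => ClosedSet C B).card := by
            simp only [Finset.card_filter]
            rw [Finset.sum_comm]
      _ ≤ ∑ C : ChordDiagram n, n.choose b := by
            apply Finset.sum_le_sum
            intro C _
            exact card_closed_sets C
      _ = _ := by simp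
  have h2 : (univ.filter fun C : ChordDiagram n => ClosedSet C B).card * n.choose b ≤
      (univ : Finset (ChordDiagram n)).card := by
    have h3 := choose_sq_le n b
    have h4 := (Nat.mul_le_mul_left
      (univ.filter fun C : ChordDiagram n => ClosedSet C B).card h3).trans h1
    rw [← mul_assoc] at h4
    exact Nat.le_of_mul_le_mul_right h4 hpos
  unfold prob
  rw [div_le_div_iff₀ (by exact_mod_cast hN) (by exact_mod_cast hpos), one_mul]
  exact_mod_cast h2

lemma choose_mono_half {n r b : ℕ} (hr : r ≤ b) (hb : 2 * b ≤ n) : n.choose r ≤ n.choose b := by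
  induction b, hr using Nat.le_induction with
  | base => exact le_rfl
  | succ b hrb ih =>
    exact (ih (by omega)).trans (Nat.choose_le_succ_of_lt_half_left (by omega))

lemma inv_choose_le {n r : ℕ} (hn : 2 * r ≤ n) (hn0 : 0 < n) :
    1 / (n.choose r : ℝ) ≤ 2 ^ r * r.factorial / (n:ℝ) ^ r := by
  have h := Nat.pow_le_choose (α := ℝ) r n
  have h2 : ((n:ℝ)/2)^r ≤ ((n + 1 - r : ℕ) : ℝ)^r := by
    gcongr
    have : n ≤ 2 * (n + 1 - r) := by omega
    have : (n:ℝ) ≤ 2 * ((n + 1 - r : ℕ) : ℝ) := by exact_mod_cast this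
    linarith
  have hf : (0:ℝ) < r.factorial := by exact_mod_cast Nat.factorial_pos r
  have hnr : (0:ℝ) < n := by exact_mod_cast hn0
  have h3 : ((n:ℝ)/2)^r / r.factorial ≤ n.choose r := le_trans (by gcongr) h
  have h4 : 0 < ((n:ℝ)/2)^r / r.factorial := by positivity
  calc 1 / (n.choose r : ℝ) ≤ 1 / (((n:ℝ)/2)^r / r.factorial) := one_div_le_one_div_of_le h4 h3
    _ = _ := by rw [div_pow]; field_simp

lemma prob_false (n : ℕ) : prob n (fun _ => False) = 0 := by simp [prob]

lemma card_Win_le {n : ℕ} (k L : ℕ) (x : Fin (2*n)) : (Win k L x).card ≤ L + 2 * k + 2 := by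
  have h1 : (univ.filter fun z : Fin (2*n) => cdist x z ≤ L + k).card ≤ (range (L + k + 1)).card := by
    apply Finset.card_le_card_of_injOn (fun z => cdist x z)
    · intro z hz
      have := (Finset.mem_filter.1 hz).2
      simp only [coe_range, Set.mem_Iio]
      omega
    · intro z _ w _ h
      exact cdist_inj _ _ _ h
  have h2 : (univ.filter fun z : Fin (2*n) => cdist z x ≤ k).card ≤ (range (k + 1)).card := by
    apply Finset.card_le_card_of_injOn (fun z => cdist z x)
    · intro z hz
      have := (Finset.mem_filter.1 hz).2
      simp only [coe_range, Set.mem_Iio]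
      omega
    · intro z _ w _ h
      exact cdist_inj' _ _ _ h
  have h3 : (Win k L x) ⊆ (univ.filter fun z : Fin (2*n) => cdist x z ≤ L + k) ∪
      (univ.filter fun z : Fin (2*n) => cdist z x ≤ k) := by
    intro z hz
    simpa [Win] using hz
  have h4 := (Finset.card_le_card h3).trans (Finset.card_union_le _ _)
  simp only [card_range] at h1 h2
  omega

lemma prob_bad1 (n k L : ℕ) (hn : 4 ≤ n) :
    prob n (Bad1 n k L) ≤ (16 * (L + 2 * k + 2 : ℝ) ^ 3) / n := by
  set W : ℝ := (L + 2 * k + 2 : ℝ) with hW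
  have hW0 : 0 ≤ W := by positivity
  have hn0 : (0:ℝ) < n := by exact_mod_cast (by omega : 0 < n)
  set c : ℝ := 8 / (n:ℝ)^2 with hc
  have hc0 : 0 ≤ c := by positivity
  have hw : ∀ x : Fin (2*n), ((Win k L x).card : ℝ) ≤ W := by
    intro x
    have := card_Win_le k L x
    rw [hW]; exact_mod_cast this
  have hbase : ∀ x y u v : Fin (2*n), prob n (fun C =>
      ({x, y, u, v} : Finset (Fin (2*n))).card = 4 ∧ ClosedSet C {x, y, u, v}) ≤ c := by
    intro x y u v
    by_cases h : ({x, y, u, v} : Finset (Fin (2*n))).card = 4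
    · refine (prob_mono fun C hC => hC.2).trans ?_
      refine (prob_closed_le (b := 2) _ h).trans ?_
      refine (inv_choose_le (by omega) (by omega)).trans ?_
      rw [hc]; norm_num [Nat.factorial]
    · refine (prob_mono (F := fun _ => False) fun C hC => h hC.1).trans ?_
      rw [prob_false]; exact hc0
  have h1 : prob n (Bad1 n k L) ≤ (univ : Finset (Fin (2*n))).card * (W * (W * (W * c))) := by
    refine le_trans (prob_mono (F := fun C => ∃ x ∈ (univ : Finset (Fin (2*n))),
      ∃ y ∈ Win k L x, ∃ u ∈ Win k L x, ∃ v ∈ Win k L x,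
      ({x, y, u, v} : Finset (Fin (2*n))).card = 4 ∧ ClosedSet C {x, y, u, v}) ?_) ?_
    · rintro C ⟨x, h⟩
      exact ⟨x, mem_univ _, h⟩
    · apply prob_exists_le_mul
      intro x _
      refine (prob_exists_le_mul _ _ (W * (W * c)) ?_).trans
        (mul_le_mul_of_nonneg_right (hw x) (by positivity))
      intro y _
      refine (prob_exists_le_mul _ _ (W * c) ?_).trans
        (mul_le_mul_of_nonneg_right (hw x) (by positivity))
      intro u _
      refine (prob_exists_le_mul _ _ c ?_).trans
        (mul_le_mul_of_nonneg_right (hw x) (by positivity))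
      intro v _
      exact hbase x y u v
  refine h1.trans (le_of_eq ?_)
  simp only [Finset.card_univ, Fintype.card_fin, hc]
  push_cast
  field_simp
  ring

lemma card_small_sets (N s : ℕ) (hN : 1 ≤ N) :
    (univ.filter fun T : Finset (Fin N) => T.card < s).card ≤ s * N ^ s := by
  have h : (univ.filter fun T : Finset (Fin N) => T.card < s) ⊆
      (range s).biUnion fun j => powersetCard j univ := by
    intro T hT
    simpa using hT
  refine (Finset.card_le_card h).trans (Finset.card_biUnion_le.trans ?_)
  refine (Finset.sum_le_card_nsmul _ _ (N ^ s) ?_).trans (by simp)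
  intro j hj
  rw [Finset.card_powersetCard, Finset.card_univ, Fintype.card_fin]
  exact (Nat.choose_le_pow N j).trans (Nat.pow_le_pow_right hN (Finset.mem_range.1 hj).le)

lemma prob_bad2 (n k : ℕ) (hn : 2 * (3 * k + 3) ≤ n) :
    prob n (Bad2 n k (3 * k + 3)) ≤
      (4 * (3 * k) * 2 ^ (3 * k) * (2 ^ (3 * k + 3) * (3 * k + 3).factorial) : ℝ) / n := by
  set r := 3 * k + 3 with hr
  have hn0 : (0:ℝ) < n := by exact_mod_cast (by omega : 0 < n)
  set c : ℝ := 2 ^ r * r.factorial / (n:ℝ)^r with hc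
  have hc0 : 0 ≤ c := by positivity
  have hbase : ∀ (B : Finset (Fin (2*n))), prob n (fun C =>
      2 * r ≤ B.card ∧ B.card ≤ n ∧ ClosedSet C B) ≤ c := by
    intro B
    by_cases h : 2 * r ≤ B.card ∧ B.card ≤ n ∧ Even B.card
    · obtain ⟨h1, h2, b, hb⟩ := h
      refine (prob_mono fun C hC => hC.2.2).trans ?_
      refine (prob_closed_le (b := b) _ (by omega)).trans ?_
      refine le_trans ?_ (inv_choose_le hn (by omega))
      apply one_div_le_one_div_of_le
      · exact_mod_cast Nat.choose_pos (by omega)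
      · exact_mod_cast choose_mono_half (by omega) (by omega)
    · refine (prob_mono (F := fun _ => False) fun C hC => h ⟨hC.1, hC.2.1, ?_⟩).trans ?_
      · rw [← card_lt_half C B hC.2.2]; exact even_two_mul _
      · rw [prob_false]; exact hc0
  set M : ℝ := (3 * k : ℝ) * (2 * n : ℝ) ^ (3 * k) with hM
  have hM0 : 0 ≤ M := by positivity
  have h1 : prob n (Bad2 n k r) ≤ (univ : Finset (Fin (2*n))).card *
      ((univ : Finset (Fin (2*n))).card * (M * c)) := by
    refine le_trans (prob_mono (F := fun C => ∃ x ∈ (univ : Finset (Fin (2*n))),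
      ∃ y ∈ (univ : Finset (Fin (2*n))),
      ∃ T ∈ univ.filter (fun T : Finset (Fin (2*n)) => T.card < 3 * k),
        2 * r ≤ (arcSet x y \ T).card ∧ (arcSet x y \ T).card ≤ n ∧
          ClosedSet C (arcSet x y \ T)) ?_) ?_
    · rintro C ⟨x, y, T, hT, h⟩
      exact ⟨x, mem_univ _, y, mem_univ _, T, by simpa using hT, h⟩
    · apply prob_exists_le_mul
      intro x _
      apply prob_exists_le_mul
      intro y _
      refine (prob_exists_le_mul _ _ c ?_).trans (mul_le_mul_of_nonneg_right ?_ hc0)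
      · intro T _
        exact hbase _
      · have := card_small_sets (2*n) (3*k) (by omega)
        rw [hM]; exact_mod_cast this
  refine h1.trans (le_of_eq ?_)
  simp only [Finset.card_univ, Fintype.card_fin, hc, hM]
  push_cast
  rw [mul_pow, hr, pow_add (n:ℝ) (3*k) 3]
  field_simp
  ring

lemma prob_core_tendsto (k : ℕ) (hk : 1 ≤ k) :
    Tendsto (fun n : ℕ => prob n (fun C => n - kCoreSize n k C ≠ Zc n k C)) atTop (nhds 0) := by
  set L := 2 * (3 * k + 3) + 3 * k
  have h := (tendsto_const_div_atTop_nhds_zero_nat (16 * (L + 2 * k + 2 : ℝ) ^ 3)).add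
    (tendsto_const_div_atTop_nhds_zero_nat
      (4 * (3 * k) * 2 ^ (3 * k) * (2 ^ (3 * k + 3) * (3 * k + 3).factorial) : ℝ))
  rw [add_zero] at h
  refine tendsto_of_tendsto_of_tendsto_of_le_of_le' tendsto_const_nhds h
    (Eventually.of_forall fun n => prob_nonneg _ _) ?_
  filter_upwards [eventually_ge_atTop (2 * (3 * k + 3))] with n hn
  refine le_trans ?_ (add_le_add (prob_bad1 n k L (by omega)) (prob_bad2 n k hn))
  refine le_trans (prob_mono ?_) (prob_or_le _ _)
  intro C hC
  by_contra hcon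
  push Not at hcon
  exact hC (coreSize_eq hk (by omega) C (long_core C hcon.1 hcon.2))

/-- switch so that `x` becomes matched with `y` -/
def sw {n : ℕ} (x y : Fin (2*n)) (C : ChordDiagram n) : ChordDiagram n :=
  conjCD (Equiv.swap (C.1 x) y) C

lemma conjCD_swap_swap {n : ℕ} (a b : Fin (2*n)) (C : ChordDiagram n) :
    conjCD (Equiv.swap a b) (conjCD (Equiv.swap a b) C) = C := by
  have := conjCD_symm (Equiv.swap a b) C
  rwa [Equiv.symm_swap] at this

lemma conjCD_swap_apply {n : ℕ} (a b x : Fin (2*n)) (C : ChordDiagram n) :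
    (conjCD (Equiv.swap a b) C).1 x = Equiv.swap a b (C.1 (Equiv.swap a b x)) := by
  simp [conjCD]

lemma sw_card {n : ℕ} (x y : Fin (2*n)) (hxy : x ≠ y) (E : ChordDiagram n → Prop) :
    (univ.filter fun C => E (sw x y C)).card =
      (univ.filter fun C : ChordDiagram n => C.1 x = y ∧ E C).card * (2 * n - 1) := by
  have h1 : (univ.erase x).card = 2 * n - 1 := by
    rw [Finset.card_erase_of_mem (mem_univ _), Finset.card_univ, Fintype.card_fin]
  rw [← h1, ← Finset.card_product]
  apply Finset.card_nbij' (fun C => (sw x y C, C.1 x))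
    (fun p => conjCD (Equiv.swap p.2 y) p.1)
  · intro C hC
    have hC := (Finset.mem_filter.1 hC).2
    have hx := C.2.2 x
    rw [Finset.mem_coe, Finset.mem_product]
    refine ⟨Finset.mem_filter.2 ⟨mem_univ _, ?_, hC⟩, Finset.mem_erase.2 ⟨hx, mem_univ _⟩⟩
    simp only [sw, conjCD_swap_apply]
    rw [Equiv.swap_apply_of_ne_of_ne hx.symm hxy, Equiv.swap_apply_left]
  · rintro ⟨C, c⟩ hp
    rw [Finset.mem_coe, Finset.mem_product] at hp
    have h2 := (Finset.mem_filter.1 hp.1).2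
    have h3 := (Finset.mem_erase.1 hp.2).1
    simp only at h2 h3
    refine Finset.mem_filter.2 ⟨mem_univ _, ?_⟩
    have h4 : (conjCD (Equiv.swap c y) C).1 x = c := by
      rw [conjCD_swap_apply, Equiv.swap_apply_of_ne_of_ne h3.symm hxy, h2.1,
        Equiv.swap_apply_right]
    simp only [sw]
    rw [h4, conjCD_swap_swap]
    exact h2.2
  · intro C hC
    simp only [sw]
    exact conjCD_swap_swap _ _ _
  · rintro ⟨C, c⟩ hp
    rw [Finset.mem_coe, Finset.mem_product] at hp
    have h2 := (Finset.mem_filter.1 hp.1).2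
    have h3 := (Finset.mem_erase.1 hp.2).1
    simp only at h2 h3
    have h4 : (conjCD (Equiv.swap c y) C).1 x = c := by
      rw [conjCD_swap_apply, Equiv.swap_apply_of_ne_of_ne h3.symm hxy, h2.1,
        Equiv.swap_apply_right]
    simp only [sw]
    rw [h4, conjCD_swap_swap]

lemma sw_prob {n : ℕ} (x y : Fin (2*n)) (hxy : x ≠ y) (E : ChordDiagram n → Prop) :
    prob n (fun C => E (sw x y C)) = prob n (fun C => C.1 x = y ∧ E C) * (2 * n - 1) := by
  have h := sw_card x y hxy E
  have hn : 1 ≤ 2 * n := by have := x.2; omega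
  have h' : ((univ.filter fun C => E (sw x y C)).card : ℝ) =
      (univ.filter fun C : ChordDiagram n => C.1 x = y ∧ E C).card * (2 * n - 1) := by
    rw [h]; push_cast [hn]; ring
  unfold prob
  rw [div_mul_eq_mul_div]
  congr 1
  convert h'

lemma Zc_sw {n k : ℕ} (hn : k < n) (x y : Fin (2*n)) (hxy : x ≠ y) (hd : cdist x y ≤ k)
    (C : ChordDiagram n) (hx : ¬ Short C k x) (hy : ¬ Short C k y)
    (h1 : ¬ cdist (C.1 x) (C.1 y) ≤ k) (h2 : ¬ cdist (C.1 y) (C.1 x) ≤ k) :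
    Zc n k (sw x y C) = Zc n k C + 1 := by
  have hCx := C.2.2 x
  have hCy := C.2.2 y
  have hxy1 : C.1 x ≠ y := by
    rintro h; apply hx; left; rwa [h]
  have hyx1 : C.1 y ≠ x := by
    rintro h; apply hxy1; rw [← h, C.2.1]
  have hcc : C.1 x ≠ C.1 y := fun h => hxy (CD_inj C h)
  have ex : (sw x y C).1 x = y := by
    simp only [sw, conjCD_swap_apply]
    rw [Equiv.swap_apply_of_ne_of_ne hCx.symm hxy, Equiv.swap_apply_left]
  have ey : (sw x y C).1 y = x := by
    have := (sw x y C).2.1 x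
    rwa [ex] at this
  have ecx : (sw x y C).1 (C.1 x) = C.1 y := by
    simp only [sw, conjCD_swap_apply]
    rw [Equiv.swap_apply_left, Equiv.swap_apply_of_ne_of_ne hcc.symm hCy]
  have ecy : (sw x y C).1 (C.1 y) = C.1 x := by
    have := (sw x y C).2.1 (C.1 x)
    rwa [ecx] at this
  have ez : ∀ z, z ≠ x → z ≠ y → z ≠ C.1 x → z ≠ C.1 y → (sw x y C).1 z = C.1 z := by
    intro z a b c d
    simp only [sw, conjCD_swap_apply]
    rw [Equiv.swap_apply_of_ne_of_ne c b, Equiv.swap_apply_of_ne_of_ne]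
    · exact fun h => a (CD_inj C h)
    · rintro h; apply d; rw [← h, C.2.1]
  unfold Short at hx hy
  push Not at hx hy
  have hyx := cdist_add x y hxy
  unfold Zc
  rw [← Finset.card_insert_of_notMem (a := x) (s := univ.filter fun z => cdist z (C.1 z) ≤ k)]
  · congr 1
    ext z
    simp only [mem_filter, mem_univ, true_and, mem_insert]
    by_cases a : z = x
    · subst a; simp [ex, hd]
    by_cases b : z = y
    · subst b; rw [ey]; simp only [a, false_or]; omega
    by_cases c : z = C.1 x
    · subst c; rw [ecx, C.2.1]; simp only [a, false_or]; omega
    by_cases d : z = C.1 y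
    · subst d; rw [ecy, C.2.1]; simp only [a, false_or]; omega
    rw [ez z a b c d]; simp [a]
  · simp only [mem_filter, mem_univ, true_and]; omega

lemma prob_four {n : ℕ} (hn : 4 ≤ n) (x y u v : Fin (2*n)) : prob n (fun C =>
      ({x, y, u, v} : Finset (Fin (2*n))).card = 4 ∧ ClosedSet C {x, y, u, v}) ≤ 8 / (n:ℝ)^2 := by
  by_cases h : ({x, y, u, v} : Finset (Fin (2*n))).card = 4
  · refine (prob_mono fun C hC => hC.2).trans ?_
    refine (prob_closed_le (b := 2) _ h).trans ?_
    refine (inv_choose_le (by omega) (by omega)).trans ?_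
    norm_num [Nat.factorial]
  · refine (prob_mono (F := fun _ => False) fun C hC => h hC.1).trans ?_
    rw [prob_false]; positivity

lemma prob_two {n : ℕ} (hn : 4 ≤ n) (x y : Fin (2*n)) (hxy : x ≠ y) :
    prob n (fun C => C.1 x = y) ≤ 2 / (n:ℝ) := by
  refine (prob_mono (F := fun C => ClosedSet C {x, y}) ?_).trans ?_
  · rintro C rfl z hz
    simp only [mem_insert, mem_singleton] at hz ⊢
    rcases hz with rfl | rfl <;> simp [C.2.1]
  · refine (prob_closed_le (b := 1) _ (Finset.card_pair hxy)).trans ?_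
    refine (inv_choose_le (by omega) (by omega)).trans ?_
    norm_num [Nat.factorial]

noncomputable def nearSet {N : ℕ} (k : ℕ) (x : Fin N) : Finset (Fin N) :=
  (univ.filter fun z => 1 ≤ cdist x z ∧ cdist x z ≤ k) ∪
  (univ.filter fun z => 1 ≤ cdist z x ∧ cdist z x ≤ k)

lemma card_near {N : ℕ} (k : ℕ) (x : Fin N) : (nearSet k x).card ≤ 2 * k := by
  have h1 := card_fwd_le x k
  have h2 := card_bwd_le x k
  have := Finset.card_union_le (univ.filter fun z => 1 ≤ cdist x z ∧ cdist x z ≤ k)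
    (univ.filter fun z => 1 ≤ cdist z x ∧ cdist z x ≤ k)
  unfold nearSet
  omega

lemma mem_near {N k : ℕ} {x z : Fin N} (hxz : x ≠ z) (h : cdist x z ≤ k ∨ cdist z x ≤ k) :
    z ∈ nearSet k x := by
  have h1 := cdist_pos _ _ hxz
  have h2 := cdist_pos _ _ hxz.symm
  simp only [nearSet, mem_union, mem_filter, mem_univ, true_and]
  tauto

lemma near_ne {N k : ℕ} {x z : Fin N} (h : z ∈ nearSet k x) : x ≠ z := by
  rintro rfl
  have : cdist x x = 0 := by simp [cdist]
  simp [nearSet, this] at h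

lemma prob_short {n k : ℕ} (hn : 4 ≤ n) (x : Fin (2*n)) :
    prob n (fun C => Short C k x) ≤ 4 * k / (n:ℝ) := by
  refine (prob_mono (F := fun C => ∃ z ∈ nearSet k x, C.1 x = z) ?_).trans ?_
  · intro C hC
    exact ⟨C.1 x, mem_near (C.2.2 x).symm hC, rfl⟩
  · refine (prob_exists_le_mul _ _ (2 / (n:ℝ)) ?_).trans ?_
    · intro z hz
      exact prob_two hn x z (near_ne hz)
    · have : ((nearSet k x).card : ℝ) ≤ 2 * k := by exact_mod_cast card_near k x
      calc _ ≤ (2 * k : ℝ) * (2 / n) := by gcongr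
        _ = _ := by ring

lemma prob_sw_bad {n k : ℕ} (hn : 4 ≤ n) (hkn : k < n) (x y : Fin (2*n)) (hxy : x ≠ y)
    (hd : cdist x y ≤ k) :
    prob n (fun C => Zc n k (sw x y C) ≠ Zc n k C + 1) ≤ 40 * k / (n:ℝ) := by
  have hn0 : (0:ℝ) < n := by exact_mod_cast (by omega : 0 < n)
  have h4 : prob n (fun C => ∃ c ∈ (univ : Finset (Fin (2*n))), ∃ d ∈ nearSet k c,
      ({x, y, c, d} : Finset (Fin (2*n))).card = 4 ∧ ClosedSet C {x, y, c, d}) ≤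
      32 * k / (n:ℝ) := by
    refine (prob_exists_le_mul _ _ (2 * k * (8 / (n:ℝ)^2)) ?_).trans ?_
    · intro c _
      refine (prob_exists_le_mul _ _ (8 / (n:ℝ)^2) ?_).trans ?_
      · intro d _
        exact prob_four hn x y c d
      · have : ((nearSet k c).card : ℝ) ≤ 2 * k := by exact_mod_cast card_near k c
        gcongr
    · simp only [Finset.card_univ, Fintype.card_fin]
      push_cast
      apply le_of_eq
      field_simp
      ring
  have h5 : prob n (fun C => Zc n k (sw x y C) ≠ Zc n k C + 1) ≤
      prob n (fun C => Short C k x ∨ Short C k y ∨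
        ∃ c ∈ (univ : Finset (Fin (2*n))), ∃ d ∈ nearSet k c,
        ({x, y, c, d} : Finset (Fin (2*n))).card = 4 ∧ ClosedSet C {x, y, c, d}) := by
    apply prob_mono
    intro C hC
    by_contra hcon
    push Not at hcon
    obtain ⟨hx, hy, hcd⟩ := hcon
    apply hC
    have hCx := C.2.2 x
    have hCy := C.2.2 y
    have hxy1 : C.1 x ≠ y := by
      rintro h; apply hx; left; rwa [h]
    have hyx1 : C.1 y ≠ x := by
      rintro h; apply hxy1; rw [← h, C.2.1]
    have hcc : C.1 x ≠ C.1 y := fun h => hxy (CD_inj C h)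
    have hnn : C.1 y ∉ nearSet k (C.1 x) := by
      intro hnear
      refine hcd (C.1 x) (mem_univ _) (C.1 y) hnear ?_ ?_
      · rw [Finset.card_eq_of_equiv_fin]
        apply Fintype.equivFinOfCardEq
        simp only [Fintype.card_coe]
        rw [Finset.card_insert_of_notMem, Finset.card_insert_of_notMem,
          Finset.card_insert_of_notMem, Finset.card_singleton]
        · simpa using hcc
        · simp [hxy1.symm, hCy.symm]
        · simp [hxy, hCx.symm, hyx1.symm]
      · intro z hz
        simp only [mem_insert, mem_singleton] at hz ⊢
        rcases hz with rfl | rfl | rfl | rfl <;> simp [C.2.1]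
    exact Zc_sw hkn x y hxy hd C hx hy (fun h => hnn (mem_near hcc (Or.inl h)))
      (fun h => hnn (mem_near hcc (Or.inr h)))
  refine h5.trans ((prob_or_le _ _).trans ?_)
  refine (add_le_add (prob_short hn x) ((prob_or_le _ _).trans
    (add_le_add (prob_short hn y) h4))).trans (le_of_eq ?_)
  ring

lemma prob_diff {n : ℕ} {E G F : ChordDiagram n → Prop} (h : ∀ C, ¬ F C → (E C ↔ G C)) :
    |prob n E - prob n G| ≤ prob n F := by
  have h1 : prob n E ≤ prob n G + prob n F :=
    (prob_mono (F := fun C => G C ∨ F C) fun C hC => by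
      by_cases hF : F C
      · exact Or.inr hF
      · exact Or.inl ((h C hF).1 hC)).trans (prob_or_le _ _)
  have h2 : prob n G ≤ prob n E + prob n F :=
    (prob_mono (F := fun C => E C ∨ F C) fun C hC => by
      by_cases hF : F C
      · exact Or.inr hF
      · exact Or.inl ((h C hF).2 hC)).trans (prob_or_le _ _)
  rw [abs_le]
  constructor <;> linarith

lemma prob_pair {n k m : ℕ} (hn : 4 ≤ n) (hkn : k < n) (x y : Fin (2*n)) (hxy : x ≠ y)
    (hd : cdist x y ≤ k) :
    |prob n (fun C => C.1 x = y ∧ Zc n k C = m + 1) * (2 * n - 1) -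
      prob n (fun C => Zc n k C = m)| ≤ 40 * k / (n:ℝ) := by
  rw [← sw_prob x y hxy (fun C => Zc n k C = m + 1)]
  refine (prob_diff ?_).trans (prob_sw_bad hn hkn x y hxy hd)
  intro C hC
  push Not at hC
  rw [hC]
  omega

noncomputable def fwdSet {N : ℕ} (k : ℕ) (x : Fin N) : Finset (Fin N) :=
  univ.filter fun z => 1 ≤ cdist x z ∧ cdist x z ≤ k

lemma prob_eq_sum (n : ℕ) (E : ChordDiagram n → Prop) :
    prob n E = (∑ C : ChordDiagram n, if E C then (1:ℝ) else 0) /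
      ((Finset.univ : Finset (ChordDiagram n)).card : ℝ) := by
  unfold prob
  rw [Finset.card_filter]
  push_cast
  rfl

lemma sum_pairs (n k : ℕ) (E : ChordDiagram n → Prop) :
    ∑ x : Fin (2*n), ∑ y ∈ fwdSet k x, prob n (fun C => C.1 x = y ∧ E C) =
      (∑ C : ChordDiagram n, if E C then (Zc n k C : ℝ) else 0) /
      ((Finset.univ : Finset (ChordDiagram n)).card : ℝ) := by
  have hC : ∀ C : ChordDiagram n, (if E C then (Zc n k C : ℝ) else 0) =
      ∑ x : Fin (2*n), ∑ y ∈ fwdSet k x, if (C.1 x = y ∧ E C) then (1:ℝ) else 0 := by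
    intro C
    by_cases h : E C
    · simp only [h, and_true, if_true, Finset.sum_ite_eq, Zc, Finset.card_filter]
      push_cast
      apply Finset.sum_congr rfl
      intro x _
      have := cdist_pos _ _ (C.2.2 x).symm
      simp [fwdSet, this]
    · simp [h]
  simp only [hC, prob_eq_sum, ← Finset.sum_div]
  congr 1
  conv_rhs => rw [Finset.sum_comm]
  apply Finset.sum_congr rfl
  intro x _
  conv_rhs => rw [Finset.sum_comm]
  apply Finset.sum_congr rfl
  intro y _
  apply Finset.sum_congr rfl
  intro C _
  congr

lemma card_fwdSet {n k : ℕ} (hkn : k < n) (x : Fin (2*n)) : (fwdSet k x).card = k :=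
  card_fwd x k (by omega)

lemma fwd_ne {N k : ℕ} {x y : Fin N} (h : y ∈ fwdSet k x) : x ≠ y := by
  rintro rfl
  have : cdist x x = 0 := by simp [cdist]
  simp [fwdSet, this] at h

lemma recurrence {n k m : ℕ} (hn : 4 ≤ n) (hkn : k < n) :
    |((m:ℝ) + 1) * prob n (fun C => Zc n k C = m + 1) - k * prob n (fun C => Zc n k C = m)| ≤
      (80 * k * k + k) / (n:ℝ) := by
  have hn0 : (4:ℝ) ≤ n := by exact_mod_cast hn
  have hN : (0:ℝ) < ((Finset.univ : Finset (ChordDiagram n)).card : ℝ) := by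
    exact_mod_cast CD_card_pos n
  have h1 := sum_pairs n k (fun C => Zc n k C = m + 1)
  have h2 : (∑ C : ChordDiagram n, if Zc n k C = m + 1 then (Zc n k C : ℝ) else 0) /
      ((Finset.univ : Finset (ChordDiagram n)).card : ℝ) =
      ((m:ℝ) + 1) * prob n (fun C => Zc n k C = m + 1) := by
    rw [prob_eq_sum, ← mul_div_assoc, Finset.mul_sum]
    congr 1
    apply Finset.sum_congr rfl
    intro C _
    split_ifs with h
    · rw [h]; push_cast; ring
    · simp
  set q := prob n (fun C => Zc n k C = m) with hq
  set P : Fin (2*n) → Fin (2*n) → ℝ :=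
    fun x y => prob n (fun C => C.1 x = y ∧ Zc n k C = m + 1) with hP
  have h3 : ((m:ℝ) + 1) * prob n (fun C => Zc n k C = m + 1) =
      ∑ x : Fin (2*n), ∑ y ∈ fwdSet k x, P x y := by
    rw [← h2, hP, h1]
    congr 1
    apply Finset.sum_congr rfl
    intro C _
    congr
  have hsumc : ∀ c : ℝ, ∑ x : Fin (2*n), ∑ y ∈ fwdSet k x, c = 2 * n * k * c := by
    intro c
    simp only [Finset.sum_const, card_fwdSet hkn, nsmul_eq_mul, Finset.card_univ,
      Fintype.card_fin]
    push_cast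
    ring
  have h4 : |(∑ x : Fin (2*n), ∑ y ∈ fwdSet k x, P x y) * (2 * n - 1) - 2 * n * k * q| ≤
      2 * n * k * (40 * k / (n:ℝ)) := by
    rw [← hsumc, ← hsumc, Finset.sum_mul, ← Finset.sum_sub_distrib]
    refine (Finset.abs_sum_le_sum_abs _ _).trans (Finset.sum_le_sum fun x _ => ?_)
    rw [Finset.sum_mul, ← Finset.sum_sub_distrib]
    refine (Finset.abs_sum_le_sum_abs _ _).trans (Finset.sum_le_sum fun y hy => ?_)
    exact prob_pair hn hkn x y (fwd_ne hy) (Finset.mem_filter.1 hy).2.2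
  rw [← h3] at h4
  set A := ((m:ℝ) + 1) * prob n (fun C => Zc n k C = m + 1)
  have hq0 : 0 ≤ q := prob_nonneg _ _
  have hq1 : q ≤ 1 := prob_le_one _ _
  have hk0 : (0:ℝ) ≤ k := Nat.cast_nonneg k
  have h5 : 2 * n * k * (40 * k / (n:ℝ)) = 80 * k * k := by field_simp; ring
  rw [h5] at h4
  have h6 : |(A - k * q) * (2 * n - 1)| ≤ 80 * k * k + k := by
    have : (A - k * q) * (2 * n - 1) = (A * (2 * n - 1) - 2 * n * k * q) + k * q := by ring
    rw [this]
    refine (abs_add_le _ _).trans (add_le_add h4 ?_)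
    rw [abs_of_nonneg (by positivity)]
    nlinarith
  rw [abs_mul, abs_of_pos (by linarith : (0:ℝ) < 2 * n - 1)] at h6
  rw [le_div_iff₀ (by linarith)]
  refine le_trans ?_ h6
  apply mul_le_mul_of_nonneg_left _ (abs_nonneg _)
  linarith

lemma tail_bound {n k : ℕ} (M : ℕ) (hn : 4 ≤ n) (hkn : k < n) :
    ((M:ℝ) + 1) * prob n (fun C => M < Zc n k C) ≤ 4 * k := by
  have hn0 : (4:ℝ) ≤ n := by exact_mod_cast hn
  have h1 := sum_pairs n k (fun C => M < Zc n k C)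
  have h2 : ((M:ℝ) + 1) * prob n (fun C => M < Zc n k C) ≤
     ∑ x : Fin (2*n), ∑ y ∈ fwdSet k x, prob n (fun C => C.1 x = y ∧ M < Zc n k C) := by
    rw [h1, prob_eq_sum, ← mul_div_assoc, Finset.mul_sum]
    gcongr with C _
    split_ifs with h
    · have : ((M + 1 : ℕ) : ℝ) ≤ (Zc n k C : ℝ) := by exact_mod_cast h
      push_cast at this
      linarith
    · simp
  refine h2.trans ?_
  have h3 : ∑ x : Fin (2*n), ∑ y ∈ fwdSet k x, prob n (fun C => C.1 x = y ∧ M < Zc n k C) ≤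
      ∑ x : Fin (2*n), ∑ y ∈ fwdSet k x, (2 / (n:ℝ)) := by
    refine Finset.sum_le_sum fun x _ => Finset.sum_le_sum fun y hy => ?_
    exact (prob_mono fun C hC => hC.1).trans (prob_two hn x y (fwd_ne hy))
  refine h3.trans (le_of_eq ?_)
  simp only [Finset.sum_const, card_fwdSet hkn, nsmul_eq_mul, Finset.card_univ,
      Fintype.card_fin]
  push_cast
  field_simp
  ring

lemma prob_and_not {n : ℕ} (E F : ChordDiagram n → Prop) (h : ∀ C, ¬ (E C ∧ F C)) :
    prob n (fun C => E C ∨ F C) = prob n E + prob n F := by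
  rw [prob_eq_sum, prob_eq_sum, prob_eq_sum, ← add_div, ← Finset.sum_add_distrib]
  congr 1
  apply Finset.sum_congr rfl
  intro C _
  have := h C
  by_cases h1 : E C <;> by_cases h2 : F C <;> simp_all

lemma prob_sum_range (n k M : ℕ) :
    ∑ m ∈ range (M + 1), prob n (fun C => Zc n k C = m) + prob n (fun C => M < Zc n k C) = 1 := by
  have h : ∑ m ∈ range (M + 1), prob n (fun C => Zc n k C = m) =
      prob n (fun C => Zc n k C < M + 1) := by
    induction (M + 1) with
    | zero => simp [prob]
    | succ j ih =>
      rw [Finset.sum_range_succ, ih, ← prob_and_not]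
      · apply prob_congr; intro C; omega
      · intro C; omega
  rw [h, ← prob_and_not, ← prob_true n]
  · apply prob_congr; intro C; simp only [iff_true]; omega
  · intro C; omega

lemma analytic (k K : ℝ) (p : ℕ → ℕ → ℝ)
    (h0 : ∀ n, |p n 0| ≤ 1)
    (h1 : ∀ m : ℕ, Tendsto (fun n => ((m:ℝ) + 1) * p n (m + 1) - k * p n m) atTop (nhds 0))
    (h2 : ∀ M : ℕ, ∀ᶠ n in atTop, |1 - ∑ m ∈ range (M + 1), p n m| ≤ K / ((M:ℝ) + 1)) (m : ℕ) :
    Tendsto (fun n => p n m) atTop (nhds (Real.exp (-k) * k ^ m / (m.factorial : ℝ))) := by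
  have s1 : ∀ m : ℕ, Tendsto (fun n => p n m - k ^ m / (m.factorial : ℝ) * p n 0) atTop
      (nhds 0) := by
    intro m
    induction m with
    | zero => simp
    | succ m ih =>
      have := ((h1 m).const_mul (1 / ((m:ℝ) + 1))).add (ih.const_mul (k / ((m:ℝ) + 1)))
      simp only [mul_zero, add_zero] at this
      refine this.congr fun n => ?_
      have hm : ((m:ℝ) + 1) ≠ 0 := by positivity
      have hf : (m.factorial : ℝ) ≠ 0 := by exact_mod_cast Nat.factorial_ne_zero m
      rw [Nat.factorial_succ]
      push_cast
      field_simp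
      ring
  have s2 : Tendsto (fun n => p n 0 * Real.exp k) atTop (nhds 1) := by
    rw [Metric.tendsto_atTop]
    intro ε hε
    have hs : Tendsto (fun M : ℕ => ∑ m ∈ range (M + 1), k ^ m / (m.factorial : ℝ)) atTop
        (nhds (Real.exp k)) := by
      have := (NormedSpace.expSeries_div_hasSum_exp k).tendsto_sum_nat
      rw [← Real.exp_eq_exp_ℝ] at this
      exact this.comp (tendsto_add_atTop_nat 1)
    have hK : Tendsto (fun M : ℕ => K / ((M:ℝ) + 1)) atTop (nhds 0) := by
      have := (tendsto_const_div_atTop_nhds_zero_nat K).comp (tendsto_add_atTop_nat 1)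
      refine this.congr fun M => ?_
      simp
    have e1 := (Metric.tendsto_nhds.1 hs) (ε / 4) (by positivity)
    have e2 := (Metric.tendsto_nhds.1 hK) (ε / 4) (by positivity)
    obtain ⟨M, hM1, hM2⟩ := (e1.and e2).exists
    have hsum : Tendsto (fun n => ∑ m ∈ range (M + 1),
        (p n m - k ^ m / (m.factorial : ℝ) * p n 0)) atTop (nhds 0) := by
      have := tendsto_finsetSum (range (M + 1)) (fun m _ => s1 m)
      simpa using this
    have e3 := (Metric.tendsto_nhds.1 hsum) (ε / 4) (by positivity)
    obtain ⟨n0, hn0⟩ := eventually_atTop.1 (e3.and (h2 M))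
    refine ⟨n0, fun n hn => ?_⟩
    obtain ⟨a1, a2⟩ := hn0 n hn
    rw [Finset.sum_sub_distrib, ← Finset.sum_mul] at a1
    set s := ∑ m ∈ range (M + 1), k ^ m / (m.factorial : ℝ)
    set t := ∑ m ∈ range (M + 1), p n m
    rw [Real.dist_eq] at hM1 hM2 a1 ⊢
    have a3 : p n 0 * Real.exp k - 1 =
        -(p n 0 * (s - Real.exp k)) - (t - s * p n 0 - 0) - (1 - t) := by ring
    have a4 : |p n 0 * (s - Real.exp k)| ≤ ε / 4 := by
      rw [abs_mul]
      have := h0 n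
      nlinarith [abs_nonneg (s - Real.exp k), abs_nonneg (p n 0)]
    have a5 := le_abs_self (K / ((M:ℝ) + 1) - 0)
    rw [a3]
    rw [abs_le] at a4 a2
    rw [abs_lt] at a1 ⊢
    constructor <;> linarith
  have s3 : Tendsto (fun n => p n 0) atTop (nhds (Real.exp (-k))) := by
    have := s2.mul_const (Real.exp (-k))
    rw [one_mul] at this
    refine this.congr fun n => ?_
    rw [mul_assoc, ← Real.exp_add]
    simp
  have := (s1 m).add (s3.const_mul (k ^ m / (m.factorial : ℝ)))
  rw [zero_add] at this
  have e : Real.exp (-k) * k ^ m / (m.factorial : ℝ) =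
    k ^ m / (m.factorial : ℝ) * Real.exp (-k) := by ring
  rw [e]
  refine this.congr fun n => ?_
  ring

theorem stmt6 (k : ℕ) (hk : 1 ≤ k) (m : ℕ) :
    Filter.Tendsto
      (fun n : ℕ => prob n (fun C => n - kCoreSize n k C = m))
      Filter.atTop (nhds (Real.exp (-(k:ℝ)) * (k:ℝ)^m / (m.factorial : ℝ))) := by
  have hZ : Tendsto (fun n : ℕ => prob n (fun C => Zc n k C = m)) atTop
      (nhds (Real.exp (-(k:ℝ)) * (k:ℝ)^m / (m.factorial : ℝ))) := by
    refine analytic (k:ℝ) (4 * k) (fun n m => prob n (fun C => Zc n k C = m)) ?_ ?_ ?_ m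
    · intro n
      rw [abs_of_nonneg (prob_nonneg _ _)]
      exact prob_le_one _ _
    · intro m
      refine squeeze_zero_norm' ?_
        (tendsto_const_div_atTop_nhds_zero_nat (80 * k * k + k : ℝ))
      filter_upwards [eventually_ge_atTop (k + 4)] with n hn
      rw [Real.norm_eq_abs]
      exact recurrence (by omega) (by omega)
    · intro M
      filter_upwards [eventually_ge_atTop (k + 4)] with n hn
      have h1 := prob_sum_range n k M
      have h2 := tail_bound (n := n) (k := k) M (by omega) (by omega)
      have h3 : 1 - ∑ m ∈ range (M + 1), prob n (fun C => Zc n k C = m) =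
          prob n (fun C => M < Zc n k C) := by linarith
      rw [h3, abs_of_nonneg (prob_nonneg _ _), le_div_iff₀ (by positivity)]
      linarith
  have hdiff : Tendsto (fun n : ℕ => prob n (fun C => n - kCoreSize n k C = m) -
      prob n (fun C => Zc n k C = m)) atTop (nhds 0) := by
    refine squeeze_zero_norm ?_ (prob_core_tendsto k hk)
    intro n
    rw [Real.norm_eq_abs]
    apply prob_diff
    intro C hC
    push Not at hC
    rw [hC]
  have := hdiff.add hZ
  rw [zero_add] at this
  refine this.congr fun n => ?_
  ring
end

section
/- Let k = k(n) be a function of n with k(n) → ∞ and k(n) ≤ n−1, and let Z_k denote the number of chords of C_n of length strictly less than k. Then Z_{k(n)}/k(n) → 1 in probability as n→∞; that is, for every ε > 0, lim_{n→∞} P(|Z_{k(n)}/k(n) − 1| > ε) = 0. -/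
open scoped Classical
open Finset Filter

/-- number of diagrams with `C a = b` -/
noncomputable def cnt1 (n : ℕ) (a b : Fin (2*n)) : ℕ :=
  (Finset.univ.filter fun C : ChordDiagram n => C.1 a = b).card

/-- number of diagrams with `C a = b` and `C c = d` -/
noncomputable def cnt2 (n : ℕ) (a b c d : Fin (2*n)) : ℕ :=
  (Finset.univ.filter fun C : ChordDiagram n => C.1 a = b ∧ C.1 c = d).card

/-- conjugation of a chord diagram by a permutation -/
def conjC {n : ℕ} (σ : Equiv.Perm (Fin (2*n))) (C : ChordDiagram n) : ChordDiagram n :=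
  ⟨fun i => σ (C.1 (σ.symm i)), by
    constructor
    · intro i; simp [C.2.1]
    · intro i h
      apply C.2.2 (σ.symm i)
      rw [Equiv.eq_symm_apply]; exact h⟩

lemma conjC_val {n : ℕ} (σ : Equiv.Perm (Fin (2*n))) (C : ChordDiagram n) (i) :
    (conjC σ C).1 i = σ (C.1 (σ.symm i)) := rfl

lemma conjC_symm {n : ℕ} (σ : Equiv.Perm (Fin (2*n))) (C : ChordDiagram n) :
    conjC σ.symm (conjC σ C) = C := by
  apply Subtype.ext; funext i; simp [conjC_val]

lemma conjC_inj {n : ℕ} (σ : Equiv.Perm (Fin (2*n))) : Function.Injective (conjC σ) :=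
  Function.LeftInverse.injective (conjC_symm σ)

lemma cnt1_le {n : ℕ} (a b b' : Fin (2*n)) (h : a ≠ b) (h' : a ≠ b') :
    cnt1 n a b ≤ cnt1 n a b' := by
  unfold cnt1
  apply Finset.card_le_card_of_injOn (conjC (Equiv.swap b b'))
  · intro C hC
    simp only [Finset.coe_filter, Finset.mem_univ, true_and, Set.mem_setOf_eq] at hC ⊢
    rw [conjC_val, Equiv.symm_swap, Equiv.swap_apply_of_ne_of_ne h h', hC, Equiv.swap_apply_left]
  · exact (conjC_inj _).injOn

lemma cnt2_le {n : ℕ} (a b c d d' : Fin (2*n)) (h1 : a ≠ d) (h2 : a ≠ d') (h3 : b ≠ d)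
    (h4 : b ≠ d') (h5 : c ≠ d) (h6 : c ≠ d') :
    cnt2 n a b c d ≤ cnt2 n a b c d' := by
  unfold cnt2
  apply Finset.card_le_card_of_injOn (conjC (Equiv.swap d d'))
  · intro C hC
    simp only [Finset.coe_filter, Finset.mem_univ, true_and, Set.mem_setOf_eq] at hC ⊢
    rw [conjC_val, conjC_val, Equiv.symm_swap, Equiv.swap_apply_of_ne_of_ne h1 h2,
      Equiv.swap_apply_of_ne_of_ne h5 h6, hC.1, hC.2, Equiv.swap_apply_left,
      Equiv.swap_apply_of_ne_of_ne h3 h4]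
    exact ⟨rfl, rfl⟩
  · exact (conjC_inj _).injOn

lemma cnt1_eq {n : ℕ} (a b : Fin (2*n)) (h : a ≠ b) :
    (2*n-1) * cnt1 n a b = Fintype.card (ChordDiagram n) := by
  have hs : ∑ y ∈ Finset.univ.erase a, cnt1 n a y = (Finset.univ : Finset (ChordDiagram n)).card := by
    rw [Finset.card_eq_sum_card_fiberwise (f := fun C : ChordDiagram n => C.1 a)
      (t := Finset.univ.erase a)]
    · rfl
    · intro C _
      simpa using C.2.2 a
  rw [Finset.sum_congr rfl (g := fun _ => cnt1 n a b)] at hs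
  · rw [← Finset.card_univ, ← hs]
    simp [Finset.card_erase_of_mem]
  · intro y hy
    have hy' : a ≠ y := fun h => by simp [h] at hy
    exact le_antisymm (cnt1_le a y b hy' h) (cnt1_le a b y h hy')

lemma cnt2_eq {n : ℕ} (a b c d : Fin (2*n)) (hab : a ≠ b) (hac : a ≠ c) (had : a ≠ d)
    (hbc : b ≠ c) (hbd : b ≠ d) (hcd : c ≠ d) :
    (2*n-3) * cnt2 n a b c d = cnt1 n a b := by
  have hs : ∑ y ∈ (({a, b, c} : Finset (Fin (2*n)))ᶜ), cnt2 n a b c y = cnt1 n a b := by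
    unfold cnt1
    rw [Finset.card_eq_sum_card_fiberwise (f := fun C : ChordDiagram n => C.1 c)
      (t := (({a, b, c} : Finset (Fin (2*n)))ᶜ))]
    · apply Finset.sum_congr rfl
      intro y _
      unfold cnt2
      rw [Finset.filter_filter]
    · intro C hC
      simp only [Finset.coe_filter, Finset.mem_univ, true_and, Set.mem_setOf_eq] at hC
      simp only [Finset.coe_compl, Set.mem_compl_iff, Finset.mem_coe, Finset.mem_insert,
        Finset.mem_singleton, not_or]
      refine ⟨fun h => ?_, fun h => ?_, C.2.2 c⟩
      · have := C.2.1 c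
        rw [h, hC] at this; exact hbc this
      · have := C.2.1 c
        have h2 := C.2.1 a
        rw [h] at this; rw [hC, this] at h2; exact hac h2.symm
  rw [Finset.sum_congr rfl (g := fun _ => cnt2 n a b c d)] at hs
  · rw [← hs, Finset.sum_const, Finset.card_compl, Fintype.card_fin,
      Finset.card_eq_three.2 ⟨a, b, c, hab, hac, hbc, rfl⟩, smul_eq_mul]
  · intro y hy
    simp only [Finset.mem_compl, Finset.mem_insert, Finset.mem_singleton, not_or] at hy
    obtain ⟨h1, h2, h3⟩ := hy
    apply le_antisymm <;> apply cnt2_le <;> first | assumption | (apply Ne.symm; assumption)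

lemma cnt2_bound {n : ℕ} (hn : 3 ≤ n) (a b c d : Fin (2*n)) (hab : a ≠ b) (hcd : c ≠ d) :
    (cnt2 n a b c d : ℝ) ≤ (Fintype.card (ChordDiagram n) : ℝ) / ((2*n-1)*(2*n-3))
      + (if (c, d) = (a, b) then (Fintype.card (ChordDiagram n) : ℝ) / (2*n-1) else 0)
      + (if (c, d) = (b, a) then (Fintype.card (ChordDiagram n) : ℝ) / (2*n-1) else 0) := by
  have hn' : (3:ℝ) ≤ n := by exact_mod_cast hn
  have p1 : (0:ℝ) < 2*n-1 := by linarith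
  have p3 : (0:ℝ) < 2*n-3 := by linarith
  have e1 := cnt1_eq a b hab
  have e1' : (cnt1 n a b : ℝ) = (Fintype.card (ChordDiagram n) : ℝ) / (2*n-1) := by
    rw [eq_div_iff p1.ne', ← e1]
    push_cast [Nat.cast_sub (show 1 ≤ 2*n by omega)]; ring
  have q1 : (0:ℝ) ≤ (Fintype.card (ChordDiagram n) : ℝ) / (2*n-1) := by positivity
  have q2 : (0:ℝ) ≤ (Fintype.card (ChordDiagram n) : ℝ) / ((2*n-1)*(2*n-3)) := by positivity
  have hle : (cnt2 n a b c d : ℝ) ≤ cnt1 n a b := by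
    unfold cnt1 cnt2
    exact_mod_cast Finset.card_le_card (fun C hC => by
      simp only [Finset.mem_filter, Finset.mem_univ, true_and] at hC ⊢; exact hC.1)
  by_cases h1 : (c, d) = (a, b)
  · rw [if_pos h1]
    split_ifs <;> linarith
  by_cases h2 : (c, d) = (b, a)
  · rw [if_neg h1, if_pos h2]; linarith
  rw [if_neg h1, if_neg h2]
  by_cases hd : a ≠ c ∧ a ≠ d ∧ b ≠ c ∧ b ≠ d
  · have e2 := cnt2_eq a b c d hab hd.1 hd.2.1 hd.2.2.1 hd.2.2.2 hcd
    have e2' : (cnt2 n a b c d : ℝ) = (cnt1 n a b : ℝ) / (2*n-3) := by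
      rw [eq_div_iff p3.ne', ← e2]
      push_cast [Nat.cast_sub (show 3 ≤ 2*n by omega)]; ring
    rw [e2', e1', div_div]; linarith
  · have : cnt2 n a b c d = 0 := by
      unfold cnt2
      rw [Finset.card_eq_zero, Finset.filter_eq_empty_iff]
      rintro C - ⟨ha, hc⟩
      have ha' := C.2.1 a
      have hc' := C.2.1 c
      rw [ha] at ha'
      rw [hc] at hc'
      have key : a = c ∨ a = d ∨ b = c ∨ b = d := by tauto
      rcases key with h | h | h | h
      · subst h; apply h1; rw [← ha, ← hc]
      · subst h; apply h2; rw [← ha, hc']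
      · subst h; apply h2; rw [← hc, ha']
      · subst h; apply h1; rw [← ha', hc']
    rw [this]; simpa using q2

/-- the ordered short pairs -/
noncomputable def shortPairs (n k : ℕ) : Finset (Fin (2*n) × Fin (2*n)) :=
  Finset.univ.filter fun p => p.1 ≠ p.2 ∧
    min (max (p.1:ℕ) (p.2 : ℕ) - min (p.1:ℕ) (p.2 : ℕ) - 1)
      (2*n - (max (p.1:ℕ) (p.2 : ℕ) - min (p.1:ℕ) (p.2 : ℕ)) - 1) < k

lemma shortPairs_fib (n k : ℕ) (hk : k + 1 ≤ n) (x : Fin (2*n)) :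
    ((Finset.univ : Finset (Fin (2*n))).filter fun y => x ≠ y ∧
    min (max (x:ℕ) (y : ℕ) - min (x:ℕ) (y : ℕ) - 1)
      (2*n - (max (x:ℕ) (y : ℕ) - min (x:ℕ) (y : ℕ)) - 1) < k).card = 2 * k := by
  have hc : (Finset.Icc 1 k ∪ Finset.Ico (2*n-k) (2*n)).card = 2 * k := by
    rw [Finset.card_union_of_disjoint]
    · simp; omega
    · rw [Finset.disjoint_left]; intro d; simp; omega
  rw [← hc]
  have hx := x.2
  symm
  have hmem : ∀ d, d ∈ (Finset.Icc 1 k ∪ Finset.Ico (2*n-k) (2*n)) ↔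
      (1 ≤ d ∧ d ≤ k) ∨ (2*n-k ≤ d ∧ d < 2*n) := by intro d; simp
  refine Finset.card_bij'
    (fun d hd => ⟨if x.1 + d < 2*n then x.1 + d else x.1 + d - 2*n, ?_⟩)
    (fun y _ => if x.1 ≤ y.1 then y.1 - x.1 else y.1 + 2*n - x.1) ?_ ?_ ?_ ?_
  · rw [hmem] at hd
    split_ifs <;> omega
  · intro d hd
    rw [hmem] at hd
    simp only [Finset.mem_filter, Finset.mem_univ, true_and, Ne, Fin.ext_iff]
    split_ifs <;> omega
  · intro y hy
    have hy2 := y.2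
    simp only [Finset.mem_filter, Finset.mem_univ, true_and, Ne, Fin.ext_iff] at hy
    rw [hmem]
    split_ifs <;> omega
  · intro d hd
    rw [hmem] at hd
    dsimp only
    split_ifs <;> omega
  · intro y hy
    have hy2 := y.2
    simp only [Fin.ext_iff]
    split_ifs <;> omega

lemma shortPairs_card (n k : ℕ) (hk : k + 1 ≤ n) : (shortPairs n k).card = 2*n*(2*k) := by
  rw [Finset.card_eq_sum_card_fiberwise (f := Prod.fst) (t := Finset.univ)
    (fun _ _ => Finset.mem_coe.2 (Finset.mem_univ _))]
  rw [Finset.sum_congr rfl (g := fun _ => 2*k)]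
  · simp
  · intro x _
    rw [← shortPairs_fib n k hk x]
    refine Finset.card_bij' (fun p _ => p.2) (fun y _ => (x, y)) ?_ ?_ ?_ ?_
    · rintro ⟨a, b⟩ h
      simp only [shortPairs, Finset.mem_filter, Finset.mem_univ, true_and] at h ⊢
      obtain ⟨h, rfl⟩ := h
      exact h
    · intro y h
      simp only [shortPairs, Finset.mem_filter, Finset.mem_univ, true_and] at h ⊢
      exact ⟨h, trivial⟩
    · rintro ⟨a, b⟩ h
      simp only [shortPairs, Finset.mem_filter, Finset.mem_univ, true_and] at h ⊢
      rw [h.2]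
    · intro y h; rfl

lemma chordLength_inv {n : ℕ} (C : ChordDiagram n) (x : Fin (2*n)) :
    chordLength C (C.1 x) = chordLength C x := by
  unfold chordLength
  rw [C.2.1, max_comm, min_comm (C.1 x : ℕ)]

lemma two_shortCount (n k : ℕ) (C : ChordDiagram n) :
    (2 * shortCount n k C : ℝ) = ∑ p ∈ shortPairs n k, if C.1 p.1 = p.2 then (1:ℝ) else 0 := by
  rw [Finset.sum_boole]
  have h1 : ((shortPairs n k).filter fun p => C.1 p.1 = p.2).card =
      (Finset.univ.filter fun x : Fin (2*n) => chordLength C x < k).card := by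
    apply Finset.card_bij' (fun p _ => p.1) (fun x _ => (x, C.1 x))
    · rintro ⟨a, b⟩ h
      simp only [shortPairs, Finset.mem_filter, Finset.mem_univ, true_and] at h ⊢
      obtain ⟨h, rfl⟩ := h
      exact h.2
    · intro x h
      simp only [shortPairs, Finset.mem_filter, Finset.mem_univ, true_and] at h ⊢
      exact ⟨⟨(C.2.2 x).symm, h⟩, trivial⟩
    · rintro ⟨a, b⟩ h
      simp only [shortPairs, Finset.mem_filter, Finset.mem_univ, true_and] at h ⊢
      rw [h.2]
    · intro y h; rfl
  have h2 : (Finset.univ.filter fun x : Fin (2*n) => chordLength C x < k).card =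
      shortCount n k C + shortCount n k C := by
    have h3 : (Finset.univ.filter fun x : Fin (2*n) => C.1 x < x ∧ chordLength C x < k).card =
        shortCount n k C := by
      unfold shortCount
      apply Finset.card_bij' (fun x _ => C.1 x) (fun x _ => C.1 x)
      · intro x h
        simp only [Finset.mem_filter, Finset.mem_univ, true_and, chordLength_inv, C.2.1] at h ⊢
        exact h
      · intro x h
        simp only [Finset.mem_filter, Finset.mem_univ, true_and, chordLength_inv, C.2.1] at h ⊢
        exact h
      · intro x _; exact C.2.1 x
      · intro x _; exact C.2.1 x
    nth_rewrite 1 [← h3]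
    unfold shortCount
    rw [← Finset.card_union_of_disjoint]
    · congr 1
      ext x
      simp only [Finset.mem_filter, Finset.mem_univ, true_and, Finset.mem_union]
      have := lt_or_gt_of_ne (C.2.2 x)
      tauto
    · rw [Finset.disjoint_left]
      intro x hx hx'
      simp only [Finset.mem_filter, Finset.mem_univ, true_and] at hx hx'
      exact lt_asymm hx.1 hx'.1
  rw [h1, h2]; push_cast; ring

lemma first_moment (n k : ℕ) (hn : 3 ≤ n) (hk : k + 1 ≤ n) :
    ∑ C : ChordDiagram n, (2 * shortCount n k C : ℝ) =
      (2*n*(2*k)) * ((Fintype.card (ChordDiagram n) : ℝ) / (2*n-1)) := by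
  have hn' : (3:ℝ) ≤ n := by exact_mod_cast hn
  have p1 : (0:ℝ) < 2*n-1 := by linarith
  simp_rw [two_shortCount]
  rw [Finset.sum_comm, Finset.sum_congr rfl
    (g := fun _ => (Fintype.card (ChordDiagram n) : ℝ) / (2*n-1))]
  · rw [Finset.sum_const, shortPairs_card n k hk, nsmul_eq_mul]; push_cast; ring
  · intro p hp
    have hp' : p.1 ≠ p.2 := by
      simp only [shortPairs, Finset.mem_filter] at hp; exact hp.2.1
    rw [Finset.sum_boole]
    change ((cnt1 n p.1 p.2 : ℕ) : ℝ) = _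
    rw [eq_div_iff p1.ne', ← cnt1_eq p.1 p.2 hp']
    push_cast [Nat.cast_sub (show 1 ≤ 2*n by omega)]; ring

lemma second_moment (n k : ℕ) (hn : 3 ≤ n) (hk : k + 1 ≤ n) :
    ∑ C : ChordDiagram n, (2 * shortCount n k C : ℝ)^2 ≤
      (2*n*(2*k))^2 * ((Fintype.card (ChordDiagram n) : ℝ) / ((2*n-1)*(2*n-3)))
      + 2 * (2*n*(2*k)) * ((Fintype.card (ChordDiagram n) : ℝ) / (2*n-1)) := by
  have hn' : (3:ℝ) ≤ n := by exact_mod_cast hn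
  have p1 : (0:ℝ) < 2*n-1 := by linarith
  have q1 : (0:ℝ) ≤ (Fintype.card (ChordDiagram n) : ℝ) / (2*n-1) := by positivity
  have hS : ∀ p ∈ shortPairs n k, p.1 ≠ p.2 := by
    intro p hp
    simp only [shortPairs, Finset.mem_filter] at hp; exact hp.2.1
  have e : ∑ C : ChordDiagram n, (2 * shortCount n k C : ℝ)^2 =
      ∑ p ∈ shortPairs n k, ∑ q ∈ shortPairs n k, (cnt2 n p.1 p.2 q.1 q.2 : ℝ) := by
    simp_rw [two_shortCount, sq, Finset.sum_mul_sum]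
    rw [Finset.sum_comm]
    apply Finset.sum_congr rfl; intro p _
    rw [Finset.sum_comm]
    apply Finset.sum_congr rfl; intro q _
    unfold cnt2
    rw [← Finset.sum_boole]
    apply Finset.sum_congr rfl; intro C _
    by_cases h1 : C.1 p.1 = p.2 <;> by_cases h2 : C.1 q.1 = q.2 <;> simp [h1, h2]
  rw [e]
  set A := (Fintype.card (ChordDiagram n) : ℝ) / ((2*n-1)*(2*n-3)) with hA
  set B := (Fintype.card (ChordDiagram n) : ℝ) / (2*n-1) with hB
  have hcard : ((shortPairs n k).card : ℝ) = 2*n*(2*k) := by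
    rw [shortPairs_card n k hk]; push_cast; ring
  have hin : ∀ p ∈ shortPairs n k, ∑ q ∈ shortPairs n k, (cnt2 n p.1 p.2 q.1 q.2 : ℝ) ≤
      (2*n*(2*k)) * A + B + B := by
    intro p hp
    calc _ ≤ ∑ q ∈ shortPairs n k, (A + (if q = p then B else 0)
          + (if q = (p.2, p.1) then B else 0)) := by
          apply Finset.sum_le_sum
          intro q hq
          exact cnt2_bound hn p.1 p.2 q.1 q.2 (hS p hp) (hS q hq)
      _ ≤ _ := by
          rw [Finset.sum_add_distrib, Finset.sum_add_distrib, Finset.sum_const, nsmul_eq_mul,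
            hcard, Finset.sum_ite_eq', Finset.sum_ite_eq']
          split_ifs <;> linarith
  calc _ ≤ ∑ p ∈ shortPairs n k, ((2*n*(2*k)) * A + B + B) := Finset.sum_le_sum hin
    _ = _ := by rw [Finset.sum_const, nsmul_eq_mul, hcard]; ring

lemma var_bound (n k : ℕ) (hn : 3 ≤ n) (hk : k + 1 ≤ n) :
    ∑ C : ChordDiagram n, (2 * shortCount n k C - 2 * k : ℝ)^2 ≤
      36 * k * (Fintype.card (ChordDiagram n) : ℝ) := by
  have hn' : (3:ℝ) ≤ n := by exact_mod_cast hn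
  have p1 : (0:ℝ) < 2*n-1 := by linarith
  have p3 : (0:ℝ) < 2*n-3 := by linarith
  have hk' : (k:ℝ) ≤ n := by exact_mod_cast (by omega : k ≤ n)
  have m1 := first_moment n k hn hk
  have m2 := second_moment n k hn hk
  set N := (Fintype.card (ChordDiagram n) : ℝ) with hN
  have hN0 : 0 ≤ N := by positivity
  have e : ∑ C : ChordDiagram n, (2 * shortCount n k C - 2 * k : ℝ)^2 =
      ∑ C : ChordDiagram n, (2 * shortCount n k C : ℝ)^2
      - 4 * k * ∑ C : ChordDiagram n, (2 * shortCount n k C : ℝ) + 4 * k^2 * N := by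
    rw [Finset.mul_sum, ← Finset.sum_sub_distrib, hN, ← Finset.card_univ, mul_comm (4 * (k:ℝ)^2),
      ← nsmul_eq_mul, ← Finset.sum_const, ← Finset.sum_add_distrib]
    apply Finset.sum_congr rfl; intro C _; ring
  rw [e, m1]
  have hk0 : (0:ℝ) ≤ k := by positivity
  have b1 : (4*n+3 : ℝ) / ((2*n-1)*(2*n-3)) ≤ 5 / n := by
    rw [div_le_div_iff₀ (by positivity) (by linarith)]
    nlinarith
  have b2 : (8*n : ℝ) / (2*n-1) ≤ 16 := by
    rw [div_le_iff₀ p1]; linarith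
  have b3 : (k:ℝ)^2 * (5 / n) ≤ 5 * k := by
    rw [mul_div_assoc', div_le_iff₀ (by linarith)]
    nlinarith
  have b4 : (k:ℝ)^2 * ((4*n+3 : ℝ) / ((2*n-1)*(2*n-3))) ≤ 5 * k :=
    le_trans (mul_le_mul_of_nonneg_left b1 (by positivity)) b3
  have b5 : (k:ℝ) * ((8*n : ℝ) / (2*n-1)) ≤ 16 * k := by nlinarith
  have fin : (2*n*(2*k))^2 * (N / ((2*n-1)*(2*n-3))) + 2 * (2*n*(2*k)) * (N / (2*n-1))
      - 4 * k * ((2*n*(2*k)) * (N / (2*n-1))) + 4 * k^2 * N =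
      N * (4 * ((k:ℝ)^2 * ((4*n+3 : ℝ) / ((2*n-1)*(2*n-3)))) + (k:ℝ) * ((8*n : ℝ) / (2*n-1))) := by
    field_simp; ring
  have : N * (4 * ((k:ℝ)^2 * ((4*n+3 : ℝ) / ((2*n-1)*(2*n-3)))) + (k:ℝ) * ((8*n : ℝ) / (2*n-1)))
      ≤ N * (36 * k) := mul_le_mul_of_nonneg_left (by linarith) hN0
  linarith

lemma prob_bound (n k : ℕ) (hn : 3 ≤ n) (hk : k + 1 ≤ n) (hk0 : 0 < k) (ε : ℝ) (hε : 0 < ε) :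
    prob n (fun C => ε < |(shortCount n k C : ℝ) / (k : ℝ) - 1|) ≤ (9 / ε^2) * (k:ℝ)⁻¹ := by
  have hk0' : (0:ℝ) < k := by exact_mod_cast hk0
  have v := var_bound n k hn hk
  unfold prob
  rw [Finset.card_univ]
  set N := (Fintype.card (ChordDiagram n) : ℝ) with hN
  have hN0 : 0 ≤ N := by positivity
  set F := (Finset.univ.filter fun C : ChordDiagram n =>
    ε < |(shortCount n k C : ℝ) / (k : ℝ) - 1|) with hF
  have h : (F.card : ℝ) * (2*k*ε)^2 ≤ ∑ C : ChordDiagram n, (2 * shortCount n k C - 2 * k : ℝ)^2 := by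
    rw [← nsmul_eq_mul, ← Finset.sum_const]
    refine le_trans (Finset.sum_le_sum (g := fun C => (2 * shortCount n k C - 2 * k : ℝ)^2) ?_)
      (Finset.sum_le_sum_of_subset_of_nonneg (Finset.subset_univ F) fun _ _ _ => sq_nonneg _)
    intro C hC
    have hC' : ε < |(shortCount n k C : ℝ) / (k : ℝ) - 1| := by
      rw [hF, Finset.mem_filter] at hC; exact hC.2
    have e : (2 * shortCount n k C - 2 * k : ℝ) = (2*k) * ((shortCount n k C : ℝ) / (k : ℝ) - 1) := by
      field_simp
    rw [e, mul_pow (2*(k:ℝ)) ε, mul_pow (2*(k:ℝ)) (_ - 1), ← sq_abs ((shortCount n k C : ℝ) / (k : ℝ) - 1)]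
    gcongr
  have h2 : (F.card : ℝ) ≤ (9 / ε^2) * (k:ℝ)⁻¹ * N := by
    have h3 : (9 / ε^2) * (k:ℝ)⁻¹ * N = (36 * k * N) / (2*k*ε)^2 := by
      field_simp; ring
    rw [h3, le_div_iff₀ (by positivity)]
    linarith
  exact div_le_of_le_mul₀ hN0 (by positivity) h2

theorem stmt7 (k : ℕ → ℕ) (hk1 : Filter.Tendsto k Filter.atTop Filter.atTop)
    (hk2 : ∀ n, 1 ≤ n → k n ≤ n - 1) :
    ∀ ε : ℝ, 0 < ε →
      Filter.Tendsto
        (fun n : ℕ => prob n (fun C =>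
          ε < |(shortCount n (k n) C : ℝ) / (k n : ℝ) - 1|))
        Filter.atTop (nhds 0) := by
  intro ε hε
  have hlim : Filter.Tendsto (fun n : ℕ => (9 / ε^2) * ((k n : ℝ))⁻¹) Filter.atTop (nhds 0) := by
    have := (tendsto_inv_atTop_zero.comp
      ((tendsto_natCast_atTop_atTop (R := ℝ)).comp hk1)).const_mul (9 / ε^2)
    simpa using this
  refine tendsto_of_tendsto_of_tendsto_of_le_of_le' tendsto_const_nhds hlim ?_ ?_
  · exact Filter.Eventually.of_forall fun n => by unfold prob; positivity
  · filter_upwards [Filter.eventually_ge_atTop 3, hk1.eventually_ge_atTop 1] with n hn hkn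
    have := hk2 n (by omega)
    exact prob_bound n (k n) hn (by omega) (by omega) ε hε
end
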